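/- arXiv:2305.17857 — 3 statements merged into one kernel-verified Lean document; each statement's English description precedes it below -/
import Mathlib

section
/- Let C_reg, C_gr ≥ 0 and let ω = Σ_{k≥1} ω_k, where each ω_k : ℝ² → (−∞,0] is smooth and compactly supported, ω_k = 0 for all sufficiently large k, supp ω_k ⊂ {2^{k−1} ≤ |x| ≤ 2^{k+1}}, ‖ω_k‖_{S¹₃} ≤ C_reg, and Σ_{k≥1} q_k ≤ C_gr where q_k := −inf_{θ∈S¹} T(|x|^{−2}ω_k)(0,θ). Assume moreover that for every k ≥ 1 the function θ ↦ T(|x|^{−2}ω_k)(0,θ) is constant on S¹, equal to −q_k. Then there exists σ₀ ≥ 0 depending only on C_reg and C_gr such that for every σ ≥ σ₀ the continuous function u(x+iy) := Eω(x+iy) + σ|y| (x, y ∈ ℝ²) is plurisubharmonic on ℂ², i.e. u(z) ≤ (1/2π)∫_{S¹} u(z + e^{iθ}v) dθ for all z, v ∈ ℂ². -/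
open MeasureTheory Real

noncomputable section

/-- Directional derivative of a function on `ℝ²` in the direction `v`. -/
def pd (v : ℝ × ℝ) (ψ : ℝ × ℝ → ℝ) : ℝ × ℝ → ℝ := fun p => fderiv ℝ ψ p v

/-- The X-ray transform `Tψ(s,θ)`. -/
def xray (ψ : ℝ × ℝ → ℝ) (s θ : ℝ) : ℝ :=
  ∫ t : ℝ, ψ (t * Real.cos θ - s * Real.sin θ, t * Real.sin θ + s * Real.cos θ)

/-- The function `x ↦ |x|⁻² ψ(x)` on `ℝ²`. -/
def invSq (ψ : ℝ × ℝ → ℝ) : ℝ × ℝ → ℝ := fun p => (p.1 ^ 2 + p.2 ^ 2)⁻¹ * ψ p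

/-- `q(ψ) := −inf_{θ ∈ S¹} T(|x|⁻²ψ)(0,θ)`. -/
def qOf (ψ : ℝ × ℝ → ℝ) : ℝ := -(⨅ θ : ℝ, xray (invSq ψ) 0 θ)

/-- The Kohn–Nirenberg norm `‖ψ‖_{S¹₃}` is at most `C`. -/
def KNle (ψ : ℝ × ℝ → ℝ) (C : ℝ) : Prop :=
  ∀ γ₁ γ₂ : ℕ, γ₁ + γ₂ ≤ 3 → ∀ p : ℝ × ℝ,
    |Real.sqrt (1 + p.1 ^ 2 + p.2 ^ 2) ^ ((γ₁ + γ₂ : ℤ) - 1) *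
      (pd (1, 0))^[γ₁] ((pd (0, 1))^[γ₂] ψ) p| ≤ C

/-- The dyadic annulus `{2^{k−1} ≤ |x| ≤ 2^{k+1}}` in `ℝ²`. -/
def annulus (k : ℕ) : Set (ℝ × ℝ) :=
  {p | (2 : ℝ) ^ ((k : ℤ) - 1) ≤ Real.sqrt (p.1 ^ 2 + p.2 ^ 2) ∧
       Real.sqrt (p.1 ^ 2 + p.2 ^ 2) ≤ 2 ^ (k + 1)}

/-- Plurisubharmonicity via the sub-mean value property on complex lines. -/
def Psh (u : ℂ × ℂ → ℝ) : Prop :=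
  ∀ z v : ℂ × ℂ,
    u z ≤ (1 / (2 * π)) * ∫ θ in (0:ℝ)..(2 * π), u (z + Complex.exp (θ * Complex.I) • v)

/-- The function `u(x+iy) = Eω(x+iy) + σ|y|`, where `E` is the extension operator
`Eω(x+iy) = (1/π) ∫_ℝ ω(x+ty)/(1+t²) dt`. -/
def uExt (ω : ℝ × ℝ → ℝ) (σ : ℝ) : ℂ × ℂ → ℝ := fun z =>
  (1 / π) * (∫ t : ℝ, ω (z.1.re + t * z.1.im, z.2.re + t * z.2.im) / (1 + t ^ 2))
    + σ * Real.sqrt (z.1.im ^ 2 + z.2.im ^ 2)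

/-!
On a complex line `ζ ↦ X(ζ) + iY(ζ)` in the direction `a + ib`, with `a` and `b` linearly
independent, the map `ζ ↦ X + tY` is a similarity of ratio `√(1 + t²)`, so the Poisson weight drops
out of the Laplacian of `Eω`, leaving `(1/π) ∫ (ω_aa + ω_bb)(X + tY) dt`. An integral over a line
only sees the second derivative normal to the line, that is `∂ₛ²Tω`. If `∂ₛ²Tω ≥ -C`, this Laplacian
is therefore at least `-C ((Y × a)² + (Y × b)²) / |Y|³`, which is compensated by the Laplacian of
`σ|Y|` as soon as `σ` is a large multiple of `C`.

The bound on `∂ₛ²Tω` comes from the identity `∂ₛ²Tω_k(0, θ) = W(θ) + W''(θ)` for the radial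
integrals `W(θ) = T(|x|⁻²ω_k)(0, θ)`: as `W` is constant, the right-hand side is `-q_k`. Off
`s = 0`, the Kohn–Nirenberg bound on third derivatives changes this by a multiple of `|s| / 2ᵏ`,
which sums geometrically over the shells that the line meets.

`Eω + σ|y|` is not smooth at the real point of the line. It is approximated uniformly by truncating
the integral to `[-R, R]`, softening the norm, and adding `(K/R) log (1 + R²|ζ - p|²)`, which pays
for the truncation near the real point `p`. Degenerate directions follow by density.
-/

section DirectionalDerivatives

variable {φ ψ : ℝ × ℝ → ℝ}

theorem contDiff_pd {m n : WithTop ℕ∞} (hψ : ContDiff ℝ n ψ) (hmn : m + 1 ≤ n) (v : ℝ × ℝ) :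
    ContDiff ℝ m (pd v ψ) :=
  (hψ.fderiv_right hmn).clm_apply contDiff_const

theorem contDiff_one_pd (hψ : ContDiff ℝ 2 ψ) (v : ℝ × ℝ) : ContDiff ℝ 1 (pd v ψ) :=
  contDiff_pd hψ one_add_one_eq_two.le v

theorem differentiable_pd (hψ : ContDiff ℝ 2 ψ) (v : ℝ × ℝ) : Differentiable ℝ (pd v ψ) :=
  (contDiff_one_pd hψ v).differentiable one_ne_zero

theorem continuous_pd (hψ : ContDiff ℝ 1 ψ) (v : ℝ × ℝ) : Continuous (pd v ψ) :=
  (contDiff_pd (m := 0) hψ (by simp) v).continuous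

theorem continuous_pd_pd (hψ : ContDiff ℝ 2 ψ) (u v : ℝ × ℝ) : Continuous (pd u (pd v ψ)) :=
  continuous_pd (contDiff_one_pd hψ v) u

theorem pd_add (hφ : Differentiable ℝ φ) (hψ : Differentiable ℝ ψ) (v : ℝ × ℝ) :
    pd v (φ + ψ) = pd v φ + pd v ψ := by
  ext p
  simp [pd, fderiv_add (hφ p) (hψ p)]

theorem pd_const_smul (c : ℝ) (ψ : ℝ × ℝ → ℝ) (v : ℝ × ℝ) : pd v (c • ψ) = c • pd v ψ := by
  ext p
  simp [pd, fderiv_const_smul_field]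

theorem pd_dir_smul_add_smul (c d : ℝ) (u v : ℝ × ℝ) (ψ : ℝ × ℝ → ℝ) :
    pd (c • u + d • v) ψ = c • pd u ψ + d • pd v ψ := by
  ext p
  simp [pd]

theorem pd_pd_eq_fderiv_fderiv (hψ : ContDiff ℝ 2 ψ) (u v p : ℝ × ℝ) :
    pd u (pd v ψ) p = fderiv ℝ (fderiv ℝ ψ) p u v := by
  have hd : Differentiable ℝ (fderiv ℝ ψ) :=
    (hψ.fderiv_right one_add_one_eq_two.le).differentiable one_ne_zero
  change fderiv ℝ (fun q => fderiv ℝ ψ q v) p u = _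
  simp [((hd p).hasFDerivAt.clm_apply (hasFDerivAt_const v p)).fderiv]

theorem pd_comm (hψ : ContDiff ℝ 2 ψ) (u v : ℝ × ℝ) : pd u (pd v ψ) = pd v (pd u ψ) := by
  ext p
  have hsymm : IsSymmSndFDerivAt ℝ ψ p := hψ.contDiffAt.isSymmSndFDerivAt (by simp)
  rw [pd_pd_eq_fderiv_fderiv hψ, pd_pd_eq_fderiv_fderiv hψ, hsymm.eq]

theorem pd_pd_dir_comb (hψ : ContDiff ℝ 2 ψ) (c d : ℝ) (u v p : ℝ × ℝ) :
    pd (c • u + d • v) (pd (c • u + d • v) ψ) p = c ^ 2 * pd u (pd u ψ) p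
      + 2 * (c * d) * pd u (pd v ψ) p + d ^ 2 * pd v (pd v ψ) p := by
  have hu := differentiable_pd hψ u
  have hv := differentiable_pd hψ v
  simp only [pd_dir_smul_add_smul, pd_add (hu.const_smul c) (hv.const_smul d), pd_const_smul,
    pd_comm hψ v u, Pi.add_apply, Pi.smul_apply, smul_eq_mul]
  ring

theorem hasDerivAt_comp_curve (hψ : Differentiable ℝ ψ) {γ : ℝ → ℝ × ℝ} {γ' : ℝ × ℝ} {t : ℝ}
    (hγ : HasDerivAt γ γ' t) : HasDerivAt (fun s => ψ (γ s)) (pd γ' ψ (γ t)) t :=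
  (hψ (γ t)).hasFDerivAt.comp_hasDerivAt t hγ

theorem hasDerivAt_pd_curve (hψ : ContDiff ℝ 2 ψ) {γ v : ℝ → ℝ × ℝ} {γ' v' : ℝ × ℝ} {t : ℝ}
    (hγ : HasDerivAt γ γ' t) (hv : HasDerivAt v v' t) :
    HasDerivAt (fun s => pd (v s) ψ (γ s)) (pd γ' (pd (v t) ψ) (γ t) + pd v' ψ (γ t)) t := by
  have hd : Differentiable ℝ (fderiv ℝ ψ) :=
    (hψ.fderiv_right one_add_one_eq_two.le).differentiable one_ne_zero
  rw [pd_pd_eq_fderiv_fderiv hψ]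
  exact ((hd (γ t)).hasFDerivAt.comp_hasDerivAt t hγ).clm_apply hv

theorem hasDerivAt_add_smul (x v : ℝ × ℝ) (t : ℝ) :
    HasDerivAt (fun s : ℝ => x + s • v) v t := by
  simpa using ((hasDerivAt_id t).smul_const v).const_add x

theorem pd_eq_of_hasDerivAt (hψ : Differentiable ℝ ψ) {v p : ℝ × ℝ} {D : ℝ}
    (hD : HasDerivAt (fun s : ℝ => ψ (p + s • v)) D 0) : pd v ψ p = D := by
  simpa using (hasDerivAt_comp_curve hψ (hasDerivAt_add_smul p v 0)).unique hD

theorem pd_comp_affine (hψ : Differentiable ℝ ψ) {L : ℝ × ℝ → ℝ × ℝ}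
    {A : ℝ × ℝ →L[ℝ] ℝ × ℝ} (hL : ∀ ζ, HasFDerivAt L A ζ) (w : ℝ × ℝ) :
    pd w (ψ ∘ L) = pd (A w) ψ ∘ L := by
  ext ζ
  simp [pd, ((hψ (L ζ)).hasFDerivAt.comp ζ (hL ζ)).fderiv]

theorem tsupport_pd_subset (v : ℝ × ℝ) (ψ : ℝ × ℝ → ℝ) : tsupport (pd v ψ) ⊆ tsupport ψ := by
  refine (closure_mono (Function.support_subset_iff'.2 fun p hp => ?_)).trans
    (tsupport_fderiv_subset ℝ (f := ψ))
  simp [pd, Function.notMem_support.1 hp]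

theorem hasCompactSupport_pd (hψ : HasCompactSupport ψ) (v : ℝ × ℝ) :
    HasCompactSupport (pd v ψ) :=
  hψ.mono' ((subset_tsupport _).trans (tsupport_pd_subset v ψ))

end DirectionalDerivatives

/-- The second-order operator `∂_a² + ∂_b²`; the planar Laplacian is the case of an orthonormal
frame `a, b`. -/
def frameLaplacian (a b : ℝ × ℝ) (ψ : ℝ × ℝ → ℝ) : ℝ × ℝ → ℝ :=
  pd a (pd a ψ) + pd b (pd b ψ)

section FrameLaplacian

variable {φ ψ : ℝ × ℝ → ℝ}

theorem continuous_frameLaplacian (hψ : ContDiff ℝ 2 ψ) (a b : ℝ × ℝ) :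
    Continuous (frameLaplacian a b ψ) :=
  (continuous_pd_pd hψ a a).add (continuous_pd_pd hψ b b)

theorem frameLaplacian_add (hφ : ContDiff ℝ 2 φ) (hψ : ContDiff ℝ 2 ψ) (a b : ℝ × ℝ) :
    frameLaplacian a b (φ + ψ) = frameLaplacian a b φ + frameLaplacian a b ψ := by
  have key (v : ℝ × ℝ) : pd v (pd v (φ + ψ)) = pd v (pd v φ) + pd v (pd v ψ) := by
    rw [pd_add (hφ.differentiable two_ne_zero) (hψ.differentiable two_ne_zero),
      pd_add (differentiable_pd hφ v) (differentiable_pd hψ v)]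
  simp only [frameLaplacian, key, add_add_add_comm]

theorem frameLaplacian_const_smul (c : ℝ) (ψ : ℝ × ℝ → ℝ) (a b : ℝ × ℝ) :
    frameLaplacian a b (c • ψ) = c • frameLaplacian a b ψ := by
  simp only [frameLaplacian, pd_const_smul, smul_add]

theorem frameLaplacian_comp_affine (hψ : ContDiff ℝ 2 ψ) {L : ℝ × ℝ → ℝ × ℝ}
    {A : ℝ × ℝ →L[ℝ] ℝ × ℝ} (hL : ∀ ζ, HasFDerivAt L A ζ) (a b : ℝ × ℝ) :
    frameLaplacian a b (ψ ∘ L) = frameLaplacian (A a) (A b) ψ ∘ L := by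
  have key (w : ℝ × ℝ) : pd w (pd w (ψ ∘ L)) = pd (A w) (pd (A w) ψ) ∘ L := by
    rw [pd_comp_affine (hψ.differentiable two_ne_zero) hL,
      pd_comp_affine (differentiable_pd hψ _) hL]
  simp only [frameLaplacian, key]
  rfl

theorem frameLaplacian_conformal (hψ : ContDiff ℝ 2 ψ) {c c' d d' m : ℝ}
    (hc : c ^ 2 + c' ^ 2 = m) (hd : d ^ 2 + d' ^ 2 = m) (hcd : c * d + c' * d' = 0)
    (a b : ℝ × ℝ) :
    frameLaplacian (c • a + d • b) (c' • a + d' • b) ψ = m • frameLaplacian a b ψ := by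
  ext p
  simp only [frameLaplacian, Pi.add_apply, Pi.smul_apply, smul_eq_mul, pd_pd_dir_comb hψ]
  linear_combination pd a (pd a ψ) p * hc + pd b (pd b ψ) p * hd + 2 * pd a (pd b ψ) p * hcd

end FrameLaplacian

section ParametricIntervalIntegral

variable {E : Type*} [NormedAddCommGroup E] [NormedSpace ℝ E]

theorem hasFDerivAt_param_of_contDiff {G : Type*} [NormedAddCommGroup G] [NormedSpace ℝ G]
    {Φ : E × ℝ → G} (hΦ : ContDiff ℝ 1 Φ) (x : E) (t : ℝ) :
    HasFDerivAt (fun x => Φ (x, t))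
      ((fderiv ℝ Φ (x, t)).comp (ContinuousLinearMap.inl ℝ E ℝ)) x :=
  (hΦ.differentiable one_ne_zero (x, t)).hasFDerivAt.comp x (hasFDerivAt_prodMk_left x t)

theorem hasFDerivAt_intervalIntegral_param [ProperSpace E] {G : Type*} [NormedAddCommGroup G]
    [NormedSpace ℝ G] {Φ : E × ℝ → G} (hΦ : ContDiff ℝ 1 Φ) (a b : ℝ) (x₀ : E) :
    HasFDerivAt (fun x => ∫ t in a..b, Φ (x, t))
      (∫ t in a..b, (fderiv ℝ Φ (x₀, t)).comp (ContinuousLinearMap.inl ℝ E ℝ)) x₀ := by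
  have hcont : Continuous fun p : E × ℝ =>
      (fderiv ℝ Φ p).comp (ContinuousLinearMap.inl ℝ E ℝ) :=
    (hΦ.continuous_fderiv one_ne_zero).clm_comp continuous_const
  obtain ⟨C, hC⟩ := ((isCompact_closedBall x₀ 1).prod
    (isCompact_uIcc (a := a) (b := b))).exists_bound_of_continuousOn hcont.continuousOn
  refine intervalIntegral.hasFDerivAt_integral_of_dominated_of_fderiv_le
    (F := fun x t => Φ (x, t)) (bound := fun _ => C) (Metric.closedBall_mem_nhds x₀ one_pos)
    (.of_forall fun x => (hΦ.continuous.comp (.prodMk_right x)).aestronglyMeasurable)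
    ((hΦ.continuous.comp (.prodMk_right x₀)).intervalIntegrable _ _)
    (hcont.comp (.prodMk_right x₀)).aestronglyMeasurable
    (.of_forall fun t ht x hx => hC (x, t) ⟨hx, Set.uIoc_subset_uIcc ht⟩)
    intervalIntegrable_const
    (.of_forall fun t _ x _ => hasFDerivAt_param_of_contDiff hΦ x t)

theorem fderiv_intervalIntegral_param [ProperSpace E] {Φ : E × ℝ → ℝ} (hΦ : ContDiff ℝ 1 Φ)
    (a b : ℝ) (x v : E) :
    fderiv ℝ (fun x => ∫ t in a..b, Φ (x, t)) x v
      = ∫ t in a..b, fderiv ℝ (fun x => Φ (x, t)) x v := by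
  have hcont : Continuous fun t : ℝ =>
      (fderiv ℝ Φ (x, t)).comp (ContinuousLinearMap.inl ℝ E ℝ) :=
    ((hΦ.continuous_fderiv one_ne_zero).comp (.prodMk_right x)).clm_comp continuous_const
  rw [(hasFDerivAt_intervalIntegral_param hΦ a b x).fderiv,
    ContinuousLinearMap.intervalIntegral_apply (hcont.intervalIntegrable _ _)]
  simp only [(hasFDerivAt_param_of_contDiff hΦ x _).fderiv]

theorem hasDerivAt_intervalIntegral_param {Φ : ℝ × ℝ → ℝ} (hΦ : ContDiff ℝ 1 Φ) {Φ' : ℝ → ℝ}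
    (a b x : ℝ) (hΦ' : ∀ t, HasDerivAt (fun y => Φ (y, t)) (Φ' t) x) :
    HasDerivAt (fun x => ∫ t in a..b, Φ (x, t)) (∫ t in a..b, Φ' t) x := by
  have hderiv := (hasFDerivAt_intervalIntegral_param hΦ a b x).differentiableAt.hasDerivAt
  rw [← fderiv_apply_one_eq_deriv, fderiv_intervalIntegral_param hΦ] at hderiv
  simpa only [fderiv_apply_one_eq_deriv, (hΦ' _).deriv] using hderiv

/-- The codomain varies in the induction, since differentiating replaces `G` by `E →L[ℝ] G`. -/
theorem contDiff_intervalIntegral_param.{u} {E : Type u} [NormedAddCommGroup E] [NormedSpace ℝ E]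
    [ProperSpace E] (a b : ℝ) (n : ℕ) {G : Type u} [NormedAddCommGroup G] [NormedSpace ℝ G]
    {Φ : E × ℝ → G} (hΦ : ContDiff ℝ n Φ) : ContDiff ℝ n (fun x => ∫ t in a..b, Φ (x, t)) := by
  induction n generalizing G with
  | zero =>
    exact contDiff_zero.2 (intervalIntegral.continuous_parametric_intervalIntegral_of_continuous'
      (f := fun x t => Φ (x, t)) hΦ.continuous a b)
  | succ n ih =>
    have hΦ1 : ContDiff ℝ 1 Φ := hΦ.of_le (by exact_mod_cast Nat.le_add_left 1 n)
    have hΦ' : ContDiff ℝ n (fderiv ℝ Φ) := hΦ.fderiv_right (by push_cast; rfl)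
    push_cast
    rw [contDiff_succ_iff_hasFDerivAt]
    exact ⟨_, ih (hΦ'.clm_comp contDiff_const), hasFDerivAt_intervalIntegral_param hΦ1 a b⟩

theorem contDiff_pd_param {m n : WithTop ℕ∞} {Φ : (ℝ × ℝ) × ℝ → ℝ} (hΦ : ContDiff ℝ n Φ)
    (hmn : m + 1 ≤ n) (w : ℝ × ℝ) :
    ContDiff ℝ m fun q : (ℝ × ℝ) × ℝ => pd w (fun x => Φ (x, q.2)) q.1 :=
  (ContDiff.fderiv (f := fun (q : (ℝ × ℝ) × ℝ) x => Φ (x, q.2))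
    (hΦ.comp (contDiff_snd.prodMk (contDiff_snd.comp contDiff_fst))) contDiff_fst hmn).clm_apply
    contDiff_const

theorem frameLaplacian_intervalIntegral {Φ : (ℝ × ℝ) × ℝ → ℝ} (hΦ : ContDiff ℝ 2 Φ)
    (a b : ℝ) (u v p : ℝ × ℝ) :
    frameLaplacian u v (fun x => ∫ t in a..b, Φ (x, t)) p
      = ∫ t in a..b, frameLaplacian u v (fun x => Φ (x, t)) p := by
  have hpd (w : ℝ × ℝ) := contDiff_pd_param hΦ one_add_one_eq_two.le w
  have key (w : ℝ × ℝ) : pd w (pd w fun x => ∫ t in a..b, Φ (x, t)) p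
      = ∫ t in a..b, pd w (pd w fun x => Φ (x, t)) p := by
    have hfst : pd w (fun x => ∫ t in a..b, Φ (x, t))
        = fun x => ∫ t in a..b, pd w (fun x => Φ (x, t)) x :=
      funext fun x => fderiv_intervalIntegral_param (hΦ.of_le one_le_two) a b x w
    rw [hfst]
    exact fderiv_intervalIntegral_param (hpd w) a b p w
  have hint (w : ℝ × ℝ) : IntervalIntegrable
      (fun t => pd w (pd w fun x => Φ (x, t)) p) volume a b :=
    ((contDiff_pd_param (m := 0) (hpd w) (by simp) w).continuous.comp
      (Continuous.prodMk_right p)).intervalIntegrable a b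
  simp only [frameLaplacian, Pi.add_apply, key]
  exact (intervalIntegral.integral_add (hint u) (hint v)).symm

end ParametricIntervalIntegral

section Lines

variable {ψ : ℝ × ℝ → ℝ}

theorem hasCompactSupport_comp_line (hψ : HasCompactSupport ψ) (x : ℝ × ℝ) {y : ℝ × ℝ}
    (hy : y ≠ 0) : HasCompactSupport fun t : ℝ => ψ (x + t • y) :=
  hψ.comp_isClosedEmbedding
    ((Homeomorph.addLeft x).isClosedEmbedding.comp (isClosedEmbedding_smul_left hy))

theorem integrable_comp_line (hc : Continuous ψ) (hψ : HasCompactSupport ψ) (x : ℝ × ℝ)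
    {y : ℝ × ℝ} (hy : y ≠ 0) : Integrable fun t : ℝ => ψ (x + t • y) :=
  Continuous.integrable_of_hasCompactSupport (by fun_prop) (hasCompactSupport_comp_line hψ x hy)

theorem integral_pd_line_eq_zero (hψ : ContDiff ℝ 1 ψ) (hs : HasCompactSupport ψ) (x : ℝ × ℝ)
    {y : ℝ × ℝ} (hy : y ≠ 0) : ∫ t : ℝ, pd y ψ (x + t • y) = 0 :=
  integral_eq_zero_of_hasDerivAt_of_integrable
    (fun t => hasDerivAt_comp_curve (hψ.differentiable one_ne_zero) (hasDerivAt_add_smul x y t))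
    (integrable_comp_line (continuous_pd hψ y) (hasCompactSupport_pd hs y) x hy)
    (integrable_comp_line hψ.continuous hs x hy)

theorem intervalIntegral_eq_integral_of_eq_zero {f : ℝ → ℝ} {T : ℝ}
    (hf : ∀ t, T ≤ |t| → f t = 0) : ∫ t in (-T)..T, f t = ∫ t, f t := by
  refine intervalIntegral.integral_eq_integral_of_support_subset fun t ht => ?_
  have hlt : |t| < T := lt_of_not_ge fun h => ht (hf t h)
  exact ⟨(abs_lt.1 hlt).1, (abs_lt.1 hlt).2.le⟩

theorem hasDerivAt_integral_of_eq_zero {Φ : ℝ × ℝ → ℝ} (hΦ : ContDiff ℝ 1 Φ) {T : ℝ}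
    (hT : ∀ y t, T ≤ |t| → Φ (y, t) = 0) {Φ' : ℝ → ℝ} {x : ℝ}
    (hΦ' : ∀ t, HasDerivAt (fun y => Φ (y, t)) (Φ' t) x) :
    HasDerivAt (fun y => ∫ t, Φ (y, t)) (∫ t, Φ' t) x := by
  have hT' (t : ℝ) (ht : T ≤ |t|) : Φ' t = 0 := by
    refine (hΦ' t).unique ?_
    simpa only [hT _ t ht] using hasDerivAt_const x (0 : ℝ)
  simp only [← intervalIntegral_eq_integral_of_eq_zero (hT _),
    ← intervalIntegral_eq_integral_of_eq_zero hT']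
  exact hasDerivAt_intervalIntegral_param hΦ (-T) T x hΦ'

end Lines

/-- The squared Euclidean norm; the norm of `ℝ × ℝ` in Mathlib is the supremum norm. -/
def normSq (p : ℝ × ℝ) : ℝ := p.1 ^ 2 + p.2 ^ 2

/-- The Euclidean scalar product of the plane. -/
def dot (p q : ℝ × ℝ) : ℝ := p.1 * q.1 + p.2 * q.2

/-- The signed area spanned by two vectors of the plane. -/
def cross (p q : ℝ × ℝ) : ℝ := p.1 * q.2 - p.2 * q.1

/-- The unit vector at angle `θ`. -/
def unitDir (θ : ℝ) : ℝ × ℝ := (Real.cos θ, Real.sin θ)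

/-- The unit normal of the line whose points `s • unitNormal θ + t • unitDir θ` enter `Tψ(s,θ)`. -/
def unitNormal (θ : ℝ) : ℝ × ℝ := (-Real.sin θ, Real.cos θ)

section EuclideanPlane

theorem normSq_nonneg (p : ℝ × ℝ) : 0 ≤ normSq p := by
  unfold normSq
  positivity

theorem normSq_eq_zero {p : ℝ × ℝ} : normSq p = 0 ↔ p = 0 := by
  rw [normSq, add_eq_zero_iff_of_nonneg (sq_nonneg _) (sq_nonneg _), sq_eq_zero_iff,
    sq_eq_zero_iff, Prod.ext_iff, Prod.fst_zero, Prod.snd_zero]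

theorem contDiff_normSq {n : WithTop ℕ∞} : ContDiff ℝ n normSq :=
  (contDiff_fst.pow 2).add (contDiff_snd.pow 2)

theorem normSq_smul_unitNormal_add_smul_unitDir (s t θ : ℝ) :
    normSq (s • unitNormal θ + t • unitDir θ) = s ^ 2 + t ^ 2 := by
  simp only [normSq, unitNormal, unitDir, Prod.fst_add, Prod.snd_add, Prod.smul_fst,
    Prod.smul_snd, smul_eq_mul]
  linear_combination (s ^ 2 + t ^ 2) * Real.sin_sq_add_cos_sq θ

theorem normSq_smul_unitDir (r θ : ℝ) : normSq (r • unitDir θ) = r ^ 2 := by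
  simpa using normSq_smul_unitNormal_add_smul_unitDir 0 r θ

theorem normSq_unitNormal (θ : ℝ) : normSq (unitNormal θ) = 1 := by
  simpa using normSq_smul_unitNormal_add_smul_unitDir 1 0 θ

theorem unitDir_ne_zero (θ : ℝ) : unitDir θ ≠ 0 := fun h => by
  simpa [h, normSq] using normSq_smul_unitDir 1 θ

theorem dot_smul_unitDir_unitNormal (r θ : ℝ) : dot (r • unitDir θ) (unitNormal θ) = 0 := by
  simp only [dot, unitDir, unitNormal, Prod.smul_fst, Prod.smul_snd, smul_eq_mul]
  ring

theorem xray_eq (ψ : ℝ × ℝ → ℝ) (s θ : ℝ) :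
    xray ψ s θ = ∫ t : ℝ, ψ (s • unitNormal θ + t • unitDir θ) := by
  refine integral_congr_ae (.of_forall fun t => congrArg ψ ?_)
  ext <;> simp only [unitDir, unitNormal, Prod.fst_add, Prod.snd_add, Prod.smul_fst, Prod.smul_snd,
    smul_eq_mul] <;> ring

theorem hasDerivAt_unitDir (θ : ℝ) : HasDerivAt unitDir (unitNormal θ) θ :=
  (Real.hasDerivAt_cos θ).prodMk (Real.hasDerivAt_sin θ)

theorem hasDerivAt_unitNormal (θ : ℝ) : HasDerivAt unitNormal (-unitDir θ) θ :=
  (Real.hasDerivAt_sin θ).neg.prodMk (Real.hasDerivAt_cos θ)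

theorem contDiff_unitDir {n : WithTop ℕ∞} : ContDiff ℝ n unitDir :=
  Real.contDiff_cos.prodMk Real.contDiff_sin

theorem contDiff_unitNormal {n : WithTop ℕ∞} : ContDiff ℝ n unitNormal :=
  Real.contDiff_sin.neg.prodMk Real.contDiff_cos

theorem continuous_unitDir : Continuous unitDir :=
  (contDiff_unitDir (n := 0)).continuous

theorem continuous_unitNormal : Continuous unitNormal :=
  (contDiff_unitNormal (n := 0)).continuous

theorem frameLaplacian_unitDir_unitNormal {ψ : ℝ × ℝ → ℝ} (hψ : ContDiff ℝ 2 ψ) (θ : ℝ) :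
    frameLaplacian (unitDir θ) (unitNormal θ) ψ = frameLaplacian (1, 0) (0, 1) ψ := by
  have hdir : unitDir θ = Real.cos θ • (1, 0) + Real.sin θ • (0, 1) := by simp [unitDir]
  have hnormal : unitNormal θ = -Real.sin θ • (1, 0) + Real.cos θ • (0, 1) := by
    simp [unitNormal]
  rw [hdir, hnormal, frameLaplacian_conformal hψ (m := 1) (by simp) (by simp) (by ring), one_smul]

end EuclideanPlane

section Polar

variable {ψ : ℝ × ℝ → ℝ}

theorem contDiff_pd_dir {v : ℝ → ℝ × ℝ} (hψ : ContDiff ℝ 2 ψ) (hv : ContDiff ℝ 1 v) :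
    ContDiff ℝ 1 fun q : ℝ × (ℝ × ℝ) => pd (v q.1) ψ q.2 :=
  ((hψ.fderiv_right one_add_one_eq_two.le).comp contDiff_snd).clm_apply (hv.comp contDiff_fst)

theorem continuous_pd_dir {u γ : ℝ → ℝ × ℝ} (hψ : ContDiff ℝ 1 ψ) (hu : Continuous u)
    (hγ : Continuous γ) : Continuous fun θ => pd (u θ) ψ (γ θ) :=
  ((hψ.continuous_fderiv one_ne_zero).comp hγ).clm_apply hu

theorem continuous_pd_pd_dir {u v γ : ℝ → ℝ × ℝ} (hψ : ContDiff ℝ 2 ψ) (hu : Continuous u)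
    (hv : Continuous v) (hγ : Continuous γ) :
    Continuous fun θ => pd (u θ) (pd (v θ) ψ) (γ θ) := by
  simp only [pd_pd_eq_fderiv_fderiv hψ]
  exact ((((hψ.fderiv_right one_add_one_eq_two.le).continuous_fderiv one_ne_zero).comp
    hγ).clm_apply hu).clm_apply hv

theorem hasDerivAt_radius_smul_unitDir (hψ : Differentiable ℝ ψ) (r θ : ℝ) :
    HasDerivAt (fun r : ℝ => ψ (r • unitDir θ)) (pd (unitDir θ) ψ (r • unitDir θ)) r := by
  simpa using hasDerivAt_comp_curve hψ (hasDerivAt_add_smul 0 (unitDir θ) r)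

theorem hasDerivAt_angle_smul_unitDir (hψ : Differentiable ℝ ψ) (r θ : ℝ) :
    HasDerivAt (fun θ => ψ (r • unitDir θ)) (r * pd (unitNormal θ) ψ (r • unitDir θ)) θ := by
  simpa [pd] using hasDerivAt_comp_curve hψ ((hasDerivAt_unitDir θ).const_smul r)

theorem hasDerivAt_angle_pd_unitNormal (hψ : ContDiff ℝ 2 ψ) (r θ : ℝ) :
    HasDerivAt (fun θ => pd (unitNormal θ) ψ (r • unitDir θ))
      (r * pd (unitNormal θ) (pd (unitNormal θ) ψ) (r • unitDir θ)
        - pd (unitDir θ) ψ (r • unitDir θ)) θ := by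
  simpa [pd, sub_eq_add_neg] using
    hasDerivAt_pd_curve hψ ((hasDerivAt_unitDir θ).const_smul r) (hasDerivAt_unitNormal θ)

theorem hasDerivAt_integral_circle (hψ : ContDiff ℝ 1 ψ) (r : ℝ) :
    HasDerivAt (fun r : ℝ => ∫ θ in (0 : ℝ)..2 * π, ψ (r • unitDir θ))
      (∫ θ in (0 : ℝ)..2 * π, pd (unitDir θ) ψ (r • unitDir θ)) r :=
  hasDerivAt_intervalIntegral_param (Φ := fun q => ψ (q.1 • unitDir q.2))
    (hψ.comp (contDiff_fst.smul (contDiff_unitDir.comp contDiff_snd))) 0 (2 * π) r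
    fun θ => hasDerivAt_radius_smul_unitDir (hψ.differentiable one_ne_zero) r θ

/-- The angular part of the polar Laplacian is a derivative in `θ`, hence integrates to zero. -/
theorem integral_polar_laplacian (hψ : ContDiff ℝ 2 ψ) (r : ℝ) :
    r * ∫ θ in (0 : ℝ)..2 * π, frameLaplacian (1, 0) (0, 1) ψ (r • unitDir θ)
      = ∫ θ in (0 : ℝ)..2 * π, (pd (unitDir θ) ψ (r • unitDir θ)
        + r * pd (unitDir θ) (pd (unitDir θ) ψ) (r • unitDir θ)) := by
  have hγ : Continuous fun θ => r • unitDir θ := continuous_unitDir.const_smul r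
  have hdir := continuous_pd_dir (hψ.of_le one_le_two) continuous_unitDir hγ
  have hdir2 := (continuous_pd_pd_dir hψ continuous_unitDir continuous_unitDir hγ).const_mul r
  have hnormal2 :=
    (continuous_pd_pd_dir hψ continuous_unitNormal continuous_unitNormal hγ).const_mul r
  have hangular : ∫ θ in (0 : ℝ)..2 * π,
      (r * pd (unitNormal θ) (pd (unitNormal θ) ψ) (r • unitDir θ)
        - pd (unitDir θ) ψ (r • unitDir θ)) = 0 := by
    rw [intervalIntegral.integral_eq_sub_of_hasDerivAt
      (fun θ _ => hasDerivAt_angle_pd_unitNormal hψ r θ)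
      ((hnormal2.sub hdir).intervalIntegrable _ _)]
    simp [unitNormal, unitDir]
  have hlap : Continuous fun θ => r * frameLaplacian (1, 0) (0, 1) ψ (r • unitDir θ) :=
    ((continuous_frameLaplacian hψ (1, 0) (0, 1)).comp hγ).const_mul r
  rw [← intervalIntegral.integral_const_mul, ← sub_eq_zero,
    ← intervalIntegral.integral_sub (hlap.intervalIntegrable _ _)
      ((hdir.fun_add hdir2).intervalIntegrable _ _)]
  refine (intervalIntegral.integral_congr fun θ _ => ?_).trans hangular
  rw [← frameLaplacian_unitDir_unitNormal hψ θ, frameLaplacian, Pi.add_apply]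
  ring

theorem hasDerivAt_flux_circle (hψ : ContDiff ℝ 2 ψ) (r : ℝ) :
    HasDerivAt (fun r : ℝ => r * ∫ θ in (0 : ℝ)..2 * π, pd (unitDir θ) ψ (r • unitDir θ))
      (r * ∫ θ in (0 : ℝ)..2 * π, frameLaplacian (1, 0) (0, 1) ψ (r • unitDir θ)) r := by
  rw [integral_polar_laplacian hψ]
  simp only [← intervalIntegral.integral_const_mul]
  exact hasDerivAt_intervalIntegral_param
    (Φ := fun q => q.1 * pd (unitDir q.2) ψ (q.1 • unitDir q.2))
    (contDiff_fst.mul ((contDiff_pd_dir hψ contDiff_unitDir).comp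
      (contDiff_snd.prodMk (contDiff_fst.smul (contDiff_unitDir.comp contDiff_snd)))))
    0 (2 * π) r fun θ => by
      simpa using (hasDerivAt_id' r).fun_mul
        (hasDerivAt_radius_smul_unitDir (differentiable_pd hψ (unitDir θ)) r θ)

/-- The flux of the gradient through the circle of radius `r ≤ 1` is nonnegative, so the circle
means increase with `r`. -/
theorem le_circle_integral_of_laplacian_nonneg (hψ : ContDiff ℝ 2 ψ)
    (hL : ∀ p, normSq p ≤ 1 → 0 ≤ frameLaplacian (1, 0) (0, 1) ψ p) :
    2 * π * ψ 0 ≤ ∫ θ in (0 : ℝ)..2 * π, ψ (unitDir θ) := by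
  have hmean := hasDerivAt_integral_circle (hψ.of_le one_le_two)
  have hflux := hasDerivAt_flux_circle hψ
  have hLr (r : ℝ) (hr : r ∈ Set.Icc (0 : ℝ) 1) :
      0 ≤ ∫ θ in (0 : ℝ)..2 * π, frameLaplacian (1, 0) (0, 1) ψ (r • unitDir θ) :=
    intervalIntegral.integral_nonneg two_pi_pos.le fun θ _ => hL _ <| by
      rw [normSq_smul_unitDir]
      exact pow_le_one₀ hr.1 hr.2
  have hmonoflux : MonotoneOn
      (fun r : ℝ => r * ∫ θ in (0 : ℝ)..2 * π, pd (unitDir θ) ψ (r • unitDir θ))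
      (Set.Icc 0 1) :=
    monotoneOn_of_hasDerivWithinAt_nonneg (convex_Icc 0 1)
      (fun r _ => (hflux r).continuousAt.continuousWithinAt)
      (fun r _ => (hflux r).hasDerivWithinAt)
      fun r hr => mul_nonneg (interior_subset hr).1 (hLr r (interior_subset hr))
  have hmono : MonotoneOn (fun r : ℝ => ∫ θ in (0 : ℝ)..2 * π, ψ (r • unitDir θ))
      (Set.Icc 0 1) :=
    monotoneOn_of_hasDerivWithinAt_nonneg (convex_Icc 0 1)
      (fun r _ => (hmean r).continuousAt.continuousWithinAt)
      (fun r _ => (hmean r).hasDerivWithinAt) fun r hr => by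
        rw [interior_Icc] at hr
        have h0 := hmonoflux (Set.left_mem_Icc.2 zero_le_one) (Set.Ioo_subset_Icc_self hr) hr.1.le
        exact nonneg_of_mul_nonneg_right (by simpa using h0) hr.1
  simpa using hmono (Set.left_mem_Icc.2 zero_le_one) (Set.right_mem_Icc.2 zero_le_one) zero_le_one

theorem le_circle_integral_of_approx {u : ℝ × ℝ → ℝ} (hu : Continuous u)
    (happrox : ∀ η > 0, ∃ F : ℝ × ℝ → ℝ, ContDiff ℝ 2 F ∧ ∀ p, normSq p ≤ 1 →
      |F p - u p| ≤ η ∧ 0 ≤ frameLaplacian (1, 0) (0, 1) F p) :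
    2 * π * u 0 ≤ ∫ θ in (0 : ℝ)..2 * π, u (unitDir θ) := by
  refine le_of_forall_pos_le_add fun ε hε => ?_
  obtain ⟨F, hF, hFu⟩ := happrox (ε / (4 * π)) (by positivity)
  have hcenter : u 0 ≤ F 0 + ε / (4 * π) := by
    linarith [abs_le.1 (hFu 0 (by simp [normSq])).1]
  have huc : Continuous fun θ => u (unitDir θ) := hu.comp continuous_unitDir
  have hcircle : ∫ θ in (0 : ℝ)..2 * π, F (unitDir θ)
      ≤ ∫ θ in (0 : ℝ)..2 * π, (u (unitDir θ) + ε / (4 * π)) := by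
    refine intervalIntegral.integral_mono_on two_pi_pos.le
      ((hF.continuous.comp continuous_unitDir).intervalIntegrable _ _)
      ((huc.add continuous_const).intervalIntegrable _ _) fun θ _ => ?_
    have hθ : normSq (unitDir θ) ≤ 1 := by simpa using (normSq_smul_unitDir 1 θ).le
    linarith [abs_le.1 (hFu _ hθ).1]
  rw [intervalIntegral.integral_add (huc.intervalIntegrable _ _) intervalIntegrable_const,
    intervalIntegral.integral_const, smul_eq_mul, sub_zero] at hcircle
  have hF0 := le_circle_integral_of_laplacian_nonneg hF fun p hp => (hFu p hp).2
  have hε4 : 2 * π * (ε / (4 * π)) = ε / 2 := by field_simp; norm_num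
  have := mul_le_mul_of_nonneg_left hcenter two_pi_pos.le
  rw [mul_add] at this
  linarith

end Polar

section RadialIntegrals

variable {φ χ : ℝ × ℝ → ℝ}

theorem pd_normSq (v : ℝ × ℝ) : pd v normSq = fun p => 2 * dot p v := by
  ext p
  refine pd_eq_of_hasDerivAt (contDiff_normSq.differentiable one_ne_zero) ?_
  have hline (s : ℝ) : normSq (p + s • v) = normSq p + (s * (2 * dot p v) + s ^ 2 * normSq v) := by
    simp only [dot, normSq, Prod.fst_add, Prod.snd_add, Prod.smul_fst, Prod.smul_snd, smul_eq_mul]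
    ring
  simpa [hline] using (((hasDerivAt_id' (0 : ℝ)).mul_const (2 * dot p v)).fun_add
    ((hasDerivAt_pow 2 (0 : ℝ)).mul_const (normSq v))).const_add (normSq p)

theorem pd_pd_normSq (v p : ℝ × ℝ) : pd v (pd v normSq) p = 2 * normSq v := by
  rw [pd_normSq]
  refine pd_eq_of_hasDerivAt (by unfold dot; fun_prop) ?_
  have hline (s : ℝ) : 2 * dot (p + s • v) v = 2 * dot p v + s * (2 * normSq v) := by
    simp only [dot, normSq, Prod.fst_add, Prod.snd_add, Prod.smul_fst, Prod.smul_snd, smul_eq_mul]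
    ring
  simpa only [hline, one_mul] using
    ((hasDerivAt_id' (0 : ℝ)).mul_const (2 * normSq v)).const_add (2 * dot p v)

theorem pd_mul (hφ : Differentiable ℝ φ) (hχ : Differentiable ℝ χ) (v : ℝ × ℝ) :
    pd v (φ * χ) = φ * pd v χ + χ * pd v φ := by
  ext p
  simp [pd, ((hφ p).hasFDerivAt.mul (hχ p).hasFDerivAt).fderiv]

theorem pd_pd_mul (hφ : ContDiff ℝ 2 φ) (hχ : ContDiff ℝ 2 χ) (v p : ℝ × ℝ) :
    pd v (pd v (φ * χ)) p = pd v (pd v φ) p * χ p + 2 * (pd v φ p * pd v χ p)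
      + φ p * pd v (pd v χ) p := by
  have hφ1 := hφ.differentiable two_ne_zero
  have hχ1 := hχ.differentiable two_ne_zero
  have hφ2 := differentiable_pd hφ v
  have hχ2 := differentiable_pd hχ v
  rw [pd_mul hφ1 hχ1, pd_add (hφ1.mul hχ2) (hχ1.mul hφ2), pd_mul hφ1 hχ2, pd_mul hχ1 hφ2]
  simp only [Pi.add_apply, Pi.mul_apply]
  ring

theorem pd_pd_normSq_mul_radial (hχ : ContDiff ℝ 2 χ) (t θ : ℝ) :
    pd (unitNormal θ) (pd (unitNormal θ) (normSq * χ)) (t • unitDir θ)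
      = 2 * χ (t • unitDir θ)
        + t ^ 2 * pd (unitNormal θ) (pd (unitNormal θ) χ) (t • unitDir θ) := by
  rw [pd_pd_mul contDiff_normSq hχ, pd_pd_normSq, pd_normSq]
  simp only [dot_smul_unitDir_unitNormal, normSq_smul_unitDir, normSq_unitNormal]
  ring

theorem exists_smul_unitDir_notMem_tsupport (hχ : HasCompactSupport χ) :
    ∃ T : ℝ, ∀ r θ, T ≤ |r| → r • unitDir θ ∉ tsupport χ := by
  obtain ⟨M, hM⟩ := hχ.exists_bound_of_continuousOn (f := normSq)
    (contDiff_normSq (n := 0)).continuous.continuousOn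
  refine ⟨M + 1, fun r θ hr hmem => ?_⟩
  have hrM := hM _ hmem
  rw [normSq_smul_unitDir, Real.norm_eq_abs, abs_of_nonneg (sq_nonneg r), ← sq_abs] at hrM
  nlinarith [abs_nonneg r]

theorem hasDerivAt_radialIntegral (hχ : ContDiff ℝ 1 χ) (hs : HasCompactSupport χ) (θ : ℝ) :
    HasDerivAt (fun θ => ∫ t : ℝ, χ (t • unitDir θ))
      (∫ t : ℝ, t * pd (unitNormal θ) χ (t • unitDir θ)) θ := by
  obtain ⟨T, hT⟩ := exists_smul_unitDir_notMem_tsupport hs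
  exact hasDerivAt_integral_of_eq_zero (Φ := fun q => χ (q.2 • unitDir q.1))
    (hχ.comp (contDiff_snd.smul (contDiff_unitDir.comp contDiff_fst)))
    (fun θ t ht => image_eq_zero_of_notMem_tsupport (hT t θ ht))
    fun t => hasDerivAt_angle_smul_unitDir (hχ.differentiable one_ne_zero) t θ

theorem hasDerivAt_radialIntegral_deriv (hχ : ContDiff ℝ 2 χ) (hs : HasCompactSupport χ) (θ : ℝ) :
    HasDerivAt (fun θ => ∫ t : ℝ, t * pd (unitNormal θ) χ (t • unitDir θ))
      (∫ t : ℝ, t * (t * pd (unitNormal θ) (pd (unitNormal θ) χ) (t • unitDir θ)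
        - pd (unitDir θ) χ (t • unitDir θ))) θ := by
  obtain ⟨T, hT⟩ := exists_smul_unitDir_notMem_tsupport hs
  refine hasDerivAt_integral_of_eq_zero
    (Φ := fun q => q.2 * pd (unitNormal q.1) χ (q.2 • unitDir q.1))
    (contDiff_snd.mul ((contDiff_pd_dir hχ contDiff_unitNormal).comp
      (contDiff_fst.prodMk (contDiff_snd.smul (contDiff_unitDir.comp contDiff_fst)))))
    (T := T) (fun θ t ht => ?_) fun t => (hasDerivAt_angle_pd_unitNormal hχ t θ).const_mul t
  rw [image_eq_zero_of_notMem_tsupport (f := pd (unitNormal θ) χ)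
    fun h => hT t θ ht (tsupport_pd_subset _ _ h), mul_zero]

theorem integrable_mul_radial {f : ℝ → ℝ} (hf : Continuous f) (hχ : Continuous χ)
    (hs : HasCompactSupport χ) (θ : ℝ) : Integrable fun t : ℝ => f t * χ (t • unitDir θ) :=
  (by fun_prop : Continuous fun t : ℝ => f t * χ (t • unitDir θ)).integrable_of_hasCompactSupport
    (by simpa using! (hasCompactSupport_comp_line hs 0 (unitDir_ne_zero θ)).mul_left (f := f))

theorem integral_mul_pd_radial (hχ : ContDiff ℝ 1 χ) (hs : HasCompactSupport χ) (θ : ℝ) :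
    ∫ t : ℝ, t * pd (unitDir θ) χ (t • unitDir θ) = -∫ t : ℝ, χ (t • unitDir θ) := by
  have hline : Integrable fun t : ℝ => 1 * χ (t • unitDir θ) :=
    integrable_mul_radial continuous_const hχ.continuous hs θ
  have hpd : Integrable fun t : ℝ => t * pd (unitDir θ) χ (t • unitDir θ) :=
    integrable_mul_radial continuous_id (continuous_pd hχ _) (hasCompactSupport_pd hs _) θ
  have hprod (t : ℝ) : HasDerivAt (fun t => t * χ (t • unitDir θ))
      (1 * χ (t • unitDir θ) + t * pd (unitDir θ) χ (t • unitDir θ)) t :=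
    (hasDerivAt_id' t).fun_mul
      (hasDerivAt_radius_smul_unitDir (hχ.differentiable one_ne_zero) t θ)
  have hzero := integral_eq_zero_of_hasDerivAt_of_integrable hprod (hline.fun_add hpd)
    (integrable_mul_radial continuous_id hχ.continuous hs θ)
  rw [integral_add hline hpd] at hzero
  simpa only [one_mul] using (neg_eq_of_add_eq_zero_right hzero).symm

/-- In terms of `W θ = ∫ χ(t e_θ) dt` the integral is `W + W''`. -/
theorem integral_pd_normal_normSq_mul (hχ : ContDiff ℝ 2 χ) (hs : HasCompactSupport χ) {W : ℝ}
    (hW : ∀ θ, ∫ t : ℝ, χ (t • unitDir θ) = W) (θ : ℝ) :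
    ∫ t : ℝ, pd (unitNormal θ) (pd (unitNormal θ) (normSq * χ)) (t • unitDir θ) = W := by
  have hdiff (θ : ℝ) : ∫ t : ℝ, t * pd (unitNormal θ) χ (t • unitDir θ) = 0 := by
    have := hasDerivAt_radialIntegral (hχ.of_le one_le_two) hs θ
    simp only [hW] at this
    exact this.unique (hasDerivAt_const θ W)
  have hdiff2 : ∫ t : ℝ, t * (t * pd (unitNormal θ) (pd (unitNormal θ) χ) (t • unitDir θ)
        - pd (unitDir θ) χ (t • unitDir θ)) = 0 := by
    have := hasDerivAt_radialIntegral_deriv hχ hs θ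
    simp only [hdiff] at this
    exact this.unique (hasDerivAt_const θ 0)
  have hint : Integrable fun t : ℝ => 2 * χ (t • unitDir θ) :=
    integrable_mul_radial continuous_const hχ.continuous hs θ
  have hint' : Integrable fun t : ℝ => t * pd (unitDir θ) χ (t • unitDir θ) :=
    integrable_mul_radial continuous_id (continuous_pd (hχ.of_le one_le_two) _)
      (hasCompactSupport_pd hs _) θ
  have hint2 : Integrable fun t : ℝ =>
      t ^ 2 * pd (unitNormal θ) (pd (unitNormal θ) χ) (t • unitDir θ) :=
    integrable_mul_radial (continuous_pow 2) (continuous_pd_pd hχ _ _)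
      (hasCompactSupport_pd (hasCompactSupport_pd hs _) _) θ
  have hsecond : ∫ t : ℝ, t ^ 2 * pd (unitNormal θ) (pd (unitNormal θ) χ) (t • unitDir θ) = -W := by
    rw [← hW θ, ← integral_mul_pd_radial (hχ.of_le one_le_two) hs θ, ← sub_eq_zero,
      ← integral_sub hint2 hint', ← hdiff2]
    exact integral_congr_ae (.of_forall fun t => by ring)
  simp only [pd_pd_normSq_mul_radial hχ]
  rw [integral_add hint hint2, integral_const_mul, hW, hsecond]
  ring

end RadialIntegrals

section Shells

variable {ψ : ℝ × ℝ → ℝ} {k : ℕ} {C q : ℝ}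

theorem le_normSq_of_mem_annulus {p : ℝ × ℝ} (hp : p ∈ annulus k) : 4 ^ k / 4 ≤ normSq p := by
  have hpow : (4 : ℝ) ^ k / 4 = (2 ^ ((k : ℤ) - 1)) ^ 2 := by
    rw [zpow_sub₀ two_ne_zero, zpow_natCast, zpow_one, div_pow, ← pow_mul, mul_comm k 2, pow_mul]
    norm_num
  rw [hpow, ← Real.sq_sqrt (normSq_nonneg p)]
  exact pow_le_pow_left₀ (by positivity) hp.1 2

theorem normSq_le_of_mem_annulus {p : ℝ × ℝ} (hp : p ∈ annulus k) :
    normSq p ≤ (2 ^ (k + 1)) ^ 2 :=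
  (Real.sqrt_le_left (by positivity)).1 hp.2

theorem zero_notMem_annulus (k : ℕ) : (0 : ℝ × ℝ) ∉ annulus k := fun h => by
  have hle := le_normSq_of_mem_annulus h
  rw [normSq_eq_zero.2 rfl] at hle
  exact hle.not_gt (by positivity)

theorem isBounded_annulus (k : ℕ) : Bornology.IsBounded (annulus k) := by
  refine isBounded_iff_forall_norm_le.2 ⟨2 ^ (k + 1), fun p hp => ?_⟩
  have hle : p.1 ^ 2 + p.2 ^ 2 ≤ (2 ^ (k + 1)) ^ 2 := normSq_le_of_mem_annulus hp
  refine max_le (abs_le_of_sq_le_sq ?_ (by positivity)) (abs_le_of_sq_le_sq ?_ (by positivity))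
  · linarith [sq_nonneg p.2]
  · linarith [sq_nonneg p.1]

theorem hasCompactSupport_of_tsupport_subset_annulus (hψ : tsupport ψ ⊆ annulus k) :
    HasCompactSupport ψ :=
  Metric.isCompact_of_isClosed_isBounded (isClosed_tsupport ψ) ((isBounded_annulus k).subset hψ)

theorem eq_zero_of_tsupport_subset_annulus (hψ : tsupport ψ ⊆ annulus k) {p : ℝ × ℝ}
    (hp : (2 ^ (k + 1)) ^ 2 < normSq p) : ψ p = 0 :=
  image_eq_zero_of_notMem_tsupport fun h => (normSq_le_of_mem_annulus (hψ h)).not_gt hp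

theorem tsupport_invSq_subset (ψ : ℝ × ℝ → ℝ) : tsupport (invSq ψ) ⊆ tsupport ψ :=
  closure_mono fun p hp => Function.mem_support.2 fun h => hp (by simp [invSq, h])

theorem contDiff_invSq {n : WithTop ℕ∞} (hψ : ContDiff ℝ n ψ) (h0 : (0 : ℝ × ℝ) ∉ tsupport ψ) :
    ContDiff ℝ n (invSq ψ) := by
  rw [contDiff_iff_contDiffAt]
  intro p
  by_cases hp : normSq p = 0
  · rw [normSq_eq_zero.1 hp]
    have hzero : invSq ψ =ᶠ[nhds 0] fun _ => 0 := by
      filter_upwards [notMem_tsupport_iff_eventuallyEq.1 h0] with p hp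
      simp [invSq, hp]
    exact contDiffAt_const.congr_of_eventuallyEq hzero
  · exact (contDiff_normSq.contDiffAt.inv hp).mul hψ.contDiffAt

theorem normSq_mul_invSq (h0 : ψ 0 = 0) : normSq * invSq ψ = ψ := by
  ext p
  by_cases hp : normSq p = 0
  · simp [normSq_eq_zero.1 hp, invSq, h0]
  · exact mul_inv_cancel_left₀ hp (ψ p)

theorem xray_pd_pd_normal_zero (hψ : ContDiff ℝ 2 ψ) (hs : HasCompactSupport ψ)
    (h0 : (0 : ℝ × ℝ) ∉ tsupport ψ) (hq : ∀ θ, xray (invSq ψ) 0 θ = q) (θ : ℝ) :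
    xray (pd (unitNormal θ) (pd (unitNormal θ) ψ)) 0 θ = q := by
  have hinv : HasCompactSupport (invSq ψ) :=
    hs.of_isClosed_subset (isClosed_tsupport _) (tsupport_invSq_subset ψ)
  have key := integral_pd_normal_normSq_mul (contDiff_invSq hψ h0) hinv
    (fun θ => by simpa only [xray_eq, zero_smul, zero_add] using hq θ) θ
  rw [normSq_mul_invSq (image_eq_zero_of_notMem_tsupport h0)] at key
  simpa only [xray_eq, zero_smul, zero_add] using key

theorem abs_pd_le_two_mul {n : ℝ × ℝ} (hn : normSq n = 1) {p : ℝ × ℝ} {B : ℝ}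
    (hB : ∀ u ∈ ({(1, 0), (0, 1)} : Set (ℝ × ℝ)), |pd u ψ p| ≤ B) : |pd n ψ p| ≤ 2 * B := by
  have hsq : n.1 ^ 2 + n.2 ^ 2 = 1 := hn
  have h1 : |n.1| ≤ 1 := abs_le_of_sq_le_sq (by linarith [sq_nonneg n.2]) zero_le_one
  have h2 : |n.2| ≤ 1 := abs_le_of_sq_le_sq (by linarith [sq_nonneg n.1]) zero_le_one
  have hdecomp : pd n ψ p = n.1 * pd (1, 0) ψ p + n.2 * pd (0, 1) ψ p := by
    have := congrFun (pd_dir_smul_add_smul n.1 n.2 (1, 0) (0, 1) ψ) p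
    simpa using this
  calc |pd n ψ p| ≤ |n.1| * |pd (1, 0) ψ p| + |n.2| * |pd (0, 1) ψ p| := by
        rw [hdecomp, ← abs_mul, ← abs_mul]
        exact abs_add_le _ _
    _ ≤ 1 * |pd (1, 0) ψ p| + 1 * |pd (0, 1) ψ p| := by gcongr
    _ ≤ 2 * B := by linarith [hB _ (Or.inl rfl), hB (0, 1) (Or.inr rfl)]

theorem abs_pd_pd_pd_le (hψ : ContDiff ℝ 3 ψ) {n : ℝ × ℝ} (hn : normSq n = 1) {p : ℝ × ℝ} {B : ℝ}
    (hB : ∀ u ∈ ({(1, 0), (0, 1)} : Set (ℝ × ℝ)), ∀ v ∈ ({(1, 0), (0, 1)} : Set (ℝ × ℝ)),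
      ∀ w ∈ ({(1, 0), (0, 1)} : Set (ℝ × ℝ)), |pd u (pd v (pd w ψ)) p| ≤ B) :
    |pd n (pd n (pd n ψ)) p| ≤ 8 * B := by
  have hψ2 : ContDiff ℝ 2 ψ := hψ.of_le (by norm_num)
  have hpd (w : ℝ × ℝ) : ContDiff ℝ 2 (pd w ψ) := contDiff_pd hψ (by norm_num) w
  have hthree : |pd n (pd n (pd n ψ)) p| ≤ 2 * (2 * (2 * B)) := by
    refine abs_pd_le_two_mul hn fun w hw => ?_
    rw [pd_comm (hpd n), pd_comm hψ2 w n]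
    refine abs_pd_le_two_mul hn fun v hv => ?_
    rw [pd_comm (hpd w)]
    exact abs_pd_le_two_mul hn fun u hu => hB u hu v hv w hw
  linarith

theorem KNle.nonneg (hC : KNle ψ C) : 0 ≤ C :=
  (abs_nonneg _).trans (hC 0 0 (by norm_num) 0)

theorem abs_iterate_pd_le_of_KNle (hC : KNle ψ C) {γ₁ γ₂ : ℕ} (hγ : γ₁ + γ₂ = 3) (p : ℝ × ℝ) :
    |(pd (1, 0))^[γ₁] ((pd (0, 1))^[γ₂] ψ) p| ≤ C / (1 + normSq p) := by
  have hp := normSq_nonneg p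
  have hweight : Real.sqrt (1 + p.1 ^ 2 + p.2 ^ 2) ^ (2 : ℤ) = 1 + normSq p := by
    rw [zpow_ofNat, Real.sq_sqrt (by positivity), normSq, add_assoc]
  have hbound := hC γ₁ γ₂ hγ.le p
  rw [show ((γ₁ : ℤ) + γ₂ - 1) = 2 by omega, hweight, abs_mul,
    abs_of_nonneg (by linarith : 0 ≤ 1 + normSq p)] at hbound
  rwa [le_div_iff₀' (by linarith)]

theorem abs_pd_pd_pd_le_of_KNle (hψ : ContDiff ℝ 3 ψ) (hC : KNle ψ C) {n : ℝ × ℝ}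
    (hn : normSq n = 1) (p : ℝ × ℝ) :
    |pd n (pd n (pd n ψ)) p| ≤ 8 * (C / (1 + normSq p)) := by
  have hψ2 : ContDiff ℝ 2 ψ := hψ.of_le (by norm_num)
  have hpd (w : ℝ × ℝ) : ContDiff ℝ 2 (pd w ψ) := contDiff_pd hψ (by norm_num) w
  have hγ {γ₁ γ₂ : ℕ} (h : γ₁ + γ₂ = 3) := abs_iterate_pd_le_of_KNle hC h p
  refine abs_pd_pd_pd_le hψ hn ?_
  rintro u (rfl | rfl) v (rfl | rfl) w (rfl | rfl)
  · exact hγ (γ₁ := 3) (γ₂ := 0) rfl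
  · exact hγ (γ₁ := 2) (γ₂ := 1) rfl
  · rw [pd_comm hψ2 (0, 1)]
    exact hγ (γ₁ := 2) (γ₂ := 1) rfl
  · exact hγ (γ₁ := 1) (γ₂ := 2) rfl
  · rw [pd_comm (hpd _) (0, 1), pd_comm hψ2 (0, 1)]
    exact hγ (γ₁ := 2) (γ₂ := 1) rfl
  · rw [pd_comm (hpd _) (0, 1)]
    exact hγ (γ₁ := 1) (γ₂ := 2) rfl
  · rw [pd_comm hψ2 (0, 1), pd_comm (hpd _) (0, 1)]
    exact hγ (γ₁ := 1) (γ₂ := 2) rfl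
  · exact hγ (γ₁ := 0) (γ₂ := 3) rfl

theorem abs_xray_sub_xray_zero_le {θ T B : ℝ} (hψ : ContDiff ℝ 1 ψ) (hT : 0 ≤ T)
    (hB : ∀ p, |pd (unitNormal θ) ψ p| ≤ B) (hvan : ∀ p, T ^ 2 ≤ normSq p → ψ p = 0) (s : ℝ) :
    |xray ψ s θ - xray ψ 0 θ| ≤ 2 * T * (B * |s|) := by
  have hline (s t : ℝ) : HasDerivAt (fun s : ℝ => s • unitNormal θ + t • unitDir θ)
      (unitNormal θ) s := by
    simpa using! ((hasDerivAt_id s).smul_const (unitNormal θ)).add_const (t • unitDir θ)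
  have hpointwise (t : ℝ) : ‖ψ (s • unitNormal θ + t • unitDir θ)
      - ψ ((0 : ℝ) • unitNormal θ + t • unitDir θ)‖ ≤ B * |s| := by
    have := convex_univ.norm_image_sub_le_of_norm_hasDerivWithin_le
      (fun s _ => (hasDerivAt_comp_curve (hψ.differentiable one_ne_zero)
        (hline s t)).hasDerivWithinAt)
      (fun _ _ => hB _) (Set.mem_univ (0 : ℝ)) (Set.mem_univ s)
    simpa only [sub_zero, Real.norm_eq_abs] using this
  have hzero (s t : ℝ) (ht : T ≤ |t|) : ψ (s • unitNormal θ + t • unitDir θ) = 0 := by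
    refine hvan _ ?_
    rw [normSq_smul_unitNormal_add_smul_unitDir, ← sq_abs t]
    nlinarith [sq_nonneg s]
  have hint (s : ℝ) : IntervalIntegrable (fun t => ψ (s • unitNormal θ + t • unitDir θ))
      volume (-T) T :=
    (hψ.continuous.comp (by fun_prop)).intervalIntegrable _ _
  rw [xray_eq, xray_eq, ← intervalIntegral_eq_integral_of_eq_zero (hzero s),
    ← intervalIntegral_eq_integral_of_eq_zero (hzero 0),
    ← intervalIntegral.integral_sub (hint s) (hint 0)]
  refine (intervalIntegral.norm_integral_le_of_norm_le_const fun t _ => hpointwise t).trans_eq ?_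
  rw [sub_neg_eq_add, ← two_mul, abs_of_nonneg (mul_nonneg zero_le_two hT)]
  ring

theorem xray_eq_zero_of_lt {T s θ : ℝ} (hT : 0 ≤ T) (hvan : ∀ p, T ^ 2 < normSq p → ψ p = 0)
    (hs : T < |s|) : xray ψ s θ = 0 := by
  rw [xray_eq]
  refine integral_eq_zero_of_ae (.of_forall fun t => hvan _ ?_)
  rw [normSq_smul_unitNormal_add_smul_unitDir, ← sq_abs s]
  nlinarith [sq_nonneg t]

/-- Up to a factor, the change of `∂ₛ²Tψ` between the lines at distance `0` and `|s|` from the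
origin, for a symbol `ψ` of order one supported in `annulus k`; it vanishes on the lines that miss
the annulus. -/
def shellWeight (k : ℕ) (s : ℝ) : ℝ := if |s| ≤ 2 ^ (k + 1) then |s| / 2 ^ k else 0

theorem shellWeight_succ (k : ℕ) (s : ℝ) : shellWeight (k + 1) s = shellWeight k (s / 2) := by
  have hcond : |s / 2| ≤ 2 ^ (k + 1) ↔ |s| ≤ 2 ^ (k + 1 + 1) := by
    rw [abs_div, abs_two, div_le_iff₀ two_pos, pow_succ _ (k + 1)]
  simp only [shellWeight, hcond]
  rw [abs_div, abs_two, div_div, pow_succ' _ k]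

theorem sum_shellWeight_le (N : ℕ) (s : ℝ) : ∑ k ∈ Finset.range N, shellWeight k s ≤ 4 := by
  induction N generalizing s with
  | zero => simp
  | succ N ih =>
    by_cases hs : |s| ≤ 2
    · have hterm (k : ℕ) : shellWeight k s ≤ 2 * (1 / 2) ^ k := by
        unfold shellWeight
        split_ifs
        · rw [div_pow, one_pow, mul_one_div]
          gcongr
        · positivity
      calc ∑ k ∈ Finset.range (N + 1), shellWeight k s
          ≤ 2 * ∑ k ∈ Finset.range (N + 1), (1 / 2 : ℝ) ^ k := by
            rw [Finset.mul_sum]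
            exact Finset.sum_le_sum fun k _ => hterm k
        _ ≤ 4 := by linarith [sum_geometric_two_le (N + 1)]
    · have hfirst : shellWeight 0 s = 0 := if_neg (by simpa using hs)
      rw [Finset.sum_range_succ', hfirst, add_zero]
      simpa only [shellWeight_succ] using ih (s / 2)

theorem abs_pd_pd_pd_le_of_tsupport_subset_annulus (hψ : ContDiff ℝ 3 ψ)
    (hsupp : tsupport ψ ⊆ annulus k) (hC : KNle ψ C) {n : ℝ × ℝ} (hn : normSq n = 1) (p : ℝ × ℝ) :
    |pd n (pd n (pd n ψ)) p| ≤ 32 * C / 4 ^ k := by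
  have hsub : tsupport (pd n (pd n (pd n ψ))) ⊆ annulus k :=
    (((tsupport_pd_subset _ _).trans (tsupport_pd_subset _ _)).trans (tsupport_pd_subset _ _)).trans
      hsupp
  have hC0 := hC.nonneg
  by_cases hp : p ∈ annulus k
  · calc |pd n (pd n (pd n ψ)) p| ≤ 8 * (C / (1 + normSq p)) := abs_pd_pd_pd_le_of_KNle hψ hC hn p
      _ ≤ 8 * (C / (4 ^ k / 4)) := by
        gcongr
        linarith [le_normSq_of_mem_annulus hp]
      _ = 32 * C / 4 ^ k := by field_simp; ring
  · rw [image_eq_zero_of_notMem_tsupport fun h => hp (hsub h), abs_zero]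
    positivity

theorem abs_xray_pd_pd_sub_le (hψ : ContDiff ℝ 3 ψ) (hsupp : tsupport ψ ⊆ annulus k)
    (hC : KNle ψ C) (s θ : ℝ) :
    |xray (pd (unitNormal θ) (pd (unitNormal θ) ψ)) s θ
      - xray (pd (unitNormal θ) (pd (unitNormal θ) ψ)) 0 θ| ≤ 256 * C * (|s| / 2 ^ k) := by
  have hψ' : ContDiff ℝ 1 (pd (unitNormal θ) (pd (unitNormal θ) ψ)) :=
    contDiff_one_pd (contDiff_pd hψ (by norm_num) _) _
  have hsub : tsupport (pd (unitNormal θ) (pd (unitNormal θ) ψ)) ⊆ annulus k :=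
    ((tsupport_pd_subset _ _).trans (tsupport_pd_subset _ _)).trans hsupp
  have hradius : ((2 : ℝ) ^ (k + 1)) ^ 2 < (2 ^ (k + 2)) ^ 2 := by gcongr <;> norm_num
  refine (abs_xray_sub_xray_zero_le hψ' (T := 2 ^ (k + 2)) (by positivity)
    (abs_pd_pd_pd_le_of_tsupport_subset_annulus hψ hsupp hC (normSq_unitNormal θ))
    (fun p hp => eq_zero_of_tsupport_subset_annulus hsub (hradius.trans_le hp)) s).trans_eq ?_
  have h4 : (4 : ℝ) ^ k = 2 ^ k * 2 ^ k := by rw [← mul_pow]; norm_num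
  rw [h4, pow_add]
  field_simp
  ring

theorem neg_le_xray_pd_pd (hψ : ContDiff ℝ 3 ψ) (hneg : ∀ p, ψ p ≤ 0)
    (hsupp : tsupport ψ ⊆ annulus k) (hC : KNle ψ C) (hq : ∀ θ, xray (invSq ψ) 0 θ = -q)
    (s θ : ℝ) :
    -q - 256 * C * shellWeight k s ≤ xray (pd (unitNormal θ) (pd (unitNormal θ) ψ)) s θ := by
  unfold shellWeight
  split_ifs with hs
  · have h0 : (0 : ℝ × ℝ) ∉ tsupport ψ := fun h => zero_notMem_annulus k (hsupp h)
    have hcentre := xray_pd_pd_normal_zero (hψ.of_le (by norm_num))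
      (hasCompactSupport_of_tsupport_subset_annulus hsupp) h0 hq θ
    have hdiff := abs_le.1 (abs_xray_pd_pd_sub_le hψ hsupp hC s θ)
    linarith
  · have hsub : tsupport (pd (unitNormal θ) (pd (unitNormal θ) ψ)) ⊆ annulus k :=
      ((tsupport_pd_subset _ _).trans (tsupport_pd_subset _ _)).trans hsupp
    have hq0 : -q ≤ 0 := (hq 0).symm.trans_le
      (integral_nonpos fun t => mul_nonpos_of_nonneg_of_nonpos (by positivity) (hneg _))
    rw [xray_eq_zero_of_lt (by positivity)
      (fun p hp => eq_zero_of_tsupport_subset_annulus hsub hp) (not_le.1 hs)]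
    linarith

theorem pd_sum {ι : Type*} {f : ι → ℝ × ℝ → ℝ} {K : Finset ι}
    (hf : ∀ k ∈ K, Differentiable ℝ (f k)) (v : ℝ × ℝ) :
    pd v (fun p => ∑ k ∈ K, f k p) = fun p => ∑ k ∈ K, pd v (f k) p := by
  ext p
  simp only [pd, fderiv_fun_sum fun k hk => hf k hk p, _root_.sum_apply]

theorem xray_pd_pd_sum {ι : Type*} {f : ι → ℝ × ℝ → ℝ} {K : Finset ι}
    (hf : ∀ k ∈ K, ContDiff ℝ 2 (f k)) (hs : ∀ k ∈ K, HasCompactSupport (f k)) (v : ℝ × ℝ)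
    (s θ : ℝ) :
    xray (pd v (pd v fun p => ∑ k ∈ K, f k p)) s θ = ∑ k ∈ K, xray (pd v (pd v (f k))) s θ := by
  simp only [xray_eq]
  rw [pd_sum fun k hk => (hf k hk).differentiable two_ne_zero,
    pd_sum fun k hk => differentiable_pd (hf k hk) v]
  exact integral_finsetSum _ fun k hk => integrable_comp_line (continuous_pd_pd (hf k hk) v v)
    (hasCompactSupport_pd (hasCompactSupport_pd (hs k hk) v) v) _ (unitDir_ne_zero θ)

theorem neg_le_xray_pd_pd_sum {f : ℕ → ℝ × ℝ → ℝ} {N : ℕ} {Q : ℕ → ℝ} {G : ℝ}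
    (hf : ∀ k, ContDiff ℝ 3 (f k)) (hneg : ∀ k p, f k p ≤ 0)
    (hsupp : ∀ k, tsupport (f k) ⊆ annulus (k + 1)) (hC : ∀ k, KNle (f k) C)
    (hq : ∀ k θ, xray (invSq (f k)) 0 θ = -Q k) (hG : ∑ k ∈ Finset.range N, Q k ≤ G) (s θ : ℝ) :
    -(G + 1024 * C) ≤ xray (pd (unitNormal θ) (pd (unitNormal θ)
      fun p => ∑ k ∈ Finset.range N, f k p)) s θ := by
  rw [xray_pd_pd_sum (fun k _ => (hf k).of_le (by norm_num))
    fun k _ => hasCompactSupport_of_tsupport_subset_annulus (hsupp k)]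
  calc -(G + 1024 * C)
      ≤ -(∑ k ∈ Finset.range N, Q k)
          - 256 * C * ∑ k ∈ Finset.range N, shellWeight k (s / 2) := by
        linarith [mul_le_mul_of_nonneg_left (sum_shellWeight_le N (s / 2)) (hC 0).nonneg]
    _ = ∑ k ∈ Finset.range N, (-Q k - 256 * C * shellWeight (k + 1) s) := by
        simp only [shellWeight_succ, Finset.sum_sub_distrib, Finset.sum_neg_distrib, Finset.mul_sum]
    _ ≤ ∑ k ∈ Finset.range N, xray (pd (unitNormal θ) (pd (unitNormal θ) (f k))) s θ :=
        Finset.sum_le_sum fun k _ =>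
          neg_le_xray_pd_pd (hf k) (hneg k) (hsupp k) (hC k) (hq k) s θ

end Shells

section LineIntegrals

variable {ψ : ℝ × ℝ → ℝ}

theorem eq_dot_smul_unitDir_add_dot_smul_unitNormal (w : ℝ × ℝ) (θ : ℝ) :
    w = dot w (unitDir θ) • unitDir θ + dot w (unitNormal θ) • unitNormal θ := by
  ext <;> simp only [dot, unitDir, unitNormal, Prod.fst_add, Prod.snd_add, Prod.smul_fst,
    Prod.smul_snd, smul_eq_mul]
  · linear_combination -w.1 * Real.sin_sq_add_cos_sq θ
  · linear_combination -w.2 * Real.sin_sq_add_cos_sq θ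

theorem exists_eq_sqrt_normSq_smul_unitDir (y : ℝ × ℝ) :
    ∃ θ, y = √(normSq y) • unitDir θ := by
  have hnorm : ‖(⟨y.1, y.2⟩ : ℂ)‖ = √(normSq y) := by
    rw [Complex.norm_def, Complex.normSq_mk, normSq, sq, sq]
  refine ⟨Complex.arg ⟨y.1, y.2⟩, ?_⟩
  rw [← hnorm]
  ext
  · exact (Complex.norm_mul_cos_arg ⟨y.1, y.2⟩).symm
  · exact (Complex.norm_mul_sin_arg ⟨y.1, y.2⟩).symm

theorem cross_smul_unitDir (r θ : ℝ) (a : ℝ × ℝ) :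
    cross (r • unitDir θ) a = r * dot a (unitNormal θ) := by
  simp only [cross, dot, unitDir, unitNormal, Prod.smul_fst, Prod.smul_snd, smul_eq_mul]
  ring

theorem integral_line_reparam (g : ℝ × ℝ → ℝ) {r : ℝ} (hr : 0 < r) (τ : ℝ) (x e : ℝ × ℝ) :
    ∫ t : ℝ, g (x + τ • e + t • r • e) = r⁻¹ * ∫ t : ℝ, g (x + t • e) := by
  have hline (t : ℝ) : x + τ • e + t • r • e = x + (τ + t * r) • e := by
    rw [add_assoc, add_smul, mul_smul]
  simp only [hline]
  rw [Measure.integral_comp_mul_right (fun t => g (x + (τ + t) • e)) r,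
    integral_add_left_eq_self (fun t => g (x + t • e)) τ, abs_of_pos (inv_pos.2 hr), smul_eq_mul]

theorem integral_pd_pd_line (hψ : ContDiff ℝ 2 ψ) (hs : HasCompactSupport ψ) (x : ℝ × ℝ)
    {e : ℝ × ℝ} (he : e ≠ 0) (c d : ℝ) (n : ℝ × ℝ) :
    ∫ t : ℝ, pd (c • e + d • n) (pd (c • e + d • n) ψ) (x + t • e) =
      d ^ 2 * ∫ t : ℝ, pd n (pd n ψ) (x + t • e) := by
  have hint (k : ℝ) (u v : ℝ × ℝ) : Integrable fun t : ℝ => k * pd u (pd v ψ) (x + t • e) :=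
    (integrable_comp_line (continuous_pd_pd hψ u v)
      (hasCompactSupport_pd (hasCompactSupport_pd hs v) u) x he).const_mul k
  have hzero (v : ℝ × ℝ) : ∫ t : ℝ, pd e (pd v ψ) (x + t • e) = 0 :=
    integral_pd_line_eq_zero (contDiff_one_pd hψ v) (hasCompactSupport_pd hs v) x he
  simp only [pd_pd_dir_comb hψ]
  rw [integral_add ((hint _ e e).fun_add (hint _ e n)) (hint _ n n),
    integral_add (hint _ e e) (hint _ e n)]
  simp only [integral_const_mul, hzero, mul_zero, zero_add]

theorem neg_le_integral_pd_pd (hψ : ContDiff ℝ 2 ψ) (hs : HasCompactSupport ψ) {C : ℝ}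
    (hC : ∀ s θ, -C ≤ xray (pd (unitNormal θ) (pd (unitNormal θ) ψ)) s θ) (x a : ℝ × ℝ)
    {y : ℝ × ℝ} (hy : y ≠ 0) :
    -(C * (cross y a ^ 2 / √(normSq y) ^ 3)) ≤ ∫ t : ℝ, pd a (pd a ψ) (x + t • y) := by
  have hr : 0 < √(normSq y) :=
    Real.sqrt_pos.2 ((normSq_nonneg y).lt_of_ne' fun h => hy (normSq_eq_zero.1 h))
  set r := √(normSq y)
  obtain ⟨θ, hθ⟩ : ∃ θ, y = r • unitDir θ := exists_eq_sqrt_normSq_smul_unitDir y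
  set c := dot a (unitDir θ)
  set d := dot a (unitNormal θ) with hd
  set s := dot x (unitNormal θ)
  have ha : a = c • unitDir θ + d • unitNormal θ :=
    eq_dot_smul_unitDir_add_dot_smul_unitNormal a θ
  have hx : x = s • unitNormal θ + dot x (unitDir θ) • unitDir θ :=
    (eq_dot_smul_unitDir_add_dot_smul_unitNormal x θ).trans (add_comm _ _)
  calc -(C * (cross y a ^ 2 / r ^ 3)) = r⁻¹ * (d ^ 2 * -C) := by
        rw [hθ, cross_smul_unitDir, ← hd]
        field_simp
    _ ≤ r⁻¹ * (d ^ 2 * xray (pd (unitNormal θ) (pd (unitNormal θ) ψ)) s θ) := by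
        gcongr
        exact hC s θ
    _ = ∫ t : ℝ, pd a (pd a ψ) (x + t • y) := by
        rw [hx, hθ, integral_line_reparam _ hr, ha,
          integral_pd_pd_line hψ hs _ (unitDir_ne_zero θ), xray_eq]

end LineIntegrals

section RadialFunctions

variable {f f' f'' : ℝ → ℝ}

theorem pd_comp_normSq (hf : ∀ s, 0 ≤ s → HasDerivAt f (f' s) s) (v : ℝ × ℝ) :
    pd v (f ∘ normSq) = (f' ∘ normSq) * pd v normSq := by
  ext p
  have hN : HasFDerivAt normSq (fderiv ℝ normSq p) p :=
    ((contDiff_normSq (n := 1)).differentiable one_ne_zero p).hasFDerivAt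
  simp [pd, ((hf _ (normSq_nonneg p)).comp_hasFDerivAt p hN).fderiv]

theorem pd_pd_comp_normSq (hf : ∀ s, 0 ≤ s → HasDerivAt f (f' s) s)
    (hf' : ∀ s, 0 ≤ s → HasDerivAt f' (f'' s) s) (v p : ℝ × ℝ) :
    pd v (pd v (f ∘ normSq)) p
      = 4 * f'' (normSq p) * dot p v ^ 2 + 2 * f' (normSq p) * normSq v := by
  have hd : Differentiable ℝ (f' ∘ normSq) := fun p =>
    ((hf' _ (normSq_nonneg p)).differentiableAt).comp p
      ((contDiff_normSq (n := 1)).differentiable one_ne_zero p)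
  rw [pd_comp_normSq hf, pd_mul hd (differentiable_pd contDiff_normSq v)]
  simp only [Pi.add_apply, Pi.mul_apply]
  rw [pd_pd_normSq, pd_comp_normSq hf', pd_normSq]
  simp only [Pi.mul_apply, Function.comp_apply]
  ring

/-- The smooth approximation `√(ε² + |p|²)` of the Euclidean norm. -/
def softNorm (ε : ℝ) (p : ℝ × ℝ) : ℝ := √(ε ^ 2 + normSq p)

theorem contDiff_softNorm {n : WithTop ℕ∞} {ε : ℝ} (hε : 0 < ε) : ContDiff ℝ n (softNorm ε) :=
  (contDiff_const.add contDiff_normSq).sqrt fun p => by linarith [normSq_nonneg p, pow_pos hε 2]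

theorem sqrt_normSq_le_softNorm (ε : ℝ) (p : ℝ × ℝ) : √(normSq p) ≤ softNorm ε p :=
  Real.sqrt_le_sqrt (by linarith [sq_nonneg ε])

theorem softNorm_le_add {ε : ℝ} (hε : 0 ≤ ε) (p : ℝ × ℝ) : softNorm ε p ≤ ε + √(normSq p) := by
  have hsq := Real.sq_sqrt (normSq_nonneg p)
  have hmul := mul_nonneg hε (Real.sqrt_nonneg (normSq p))
  exact Real.sqrt_le_iff.2 ⟨by positivity, by linarith⟩

theorem dot_sq_add_cross_sq (p v : ℝ × ℝ) : dot p v ^ 2 + cross p v ^ 2 = normSq p * normSq v := by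
  simp only [dot, cross, normSq]
  ring

theorem pd_pd_softNorm {ε : ℝ} (hε : 0 < ε) (v p : ℝ × ℝ) :
    pd v (pd v (softNorm ε)) p
      = (ε ^ 2 * normSq v + cross p v ^ 2) / softNorm ε p ^ 3 := by
  have hpos {s : ℝ} (hs : 0 ≤ s) : 0 < ε ^ 2 + s := by positivity
  have hsqrt (s : ℝ) (hs : 0 ≤ s) :
      HasDerivAt (fun s => √(ε ^ 2 + s)) (1 / (2 * √(ε ^ 2 + s))) s :=
    ((hasDerivAt_id s).const_add (ε ^ 2)).sqrt (hpos hs).ne'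
  have hsqrt' (s : ℝ) (hs : 0 ≤ s) : HasDerivAt (fun s => 1 / (2 * √(ε ^ 2 + s)))
      (-(1 / (4 * √(ε ^ 2 + s) ^ 3))) s := by
    have hne : √(ε ^ 2 + s) ≠ 0 := (Real.sqrt_pos.2 (hpos hs)).ne'
    simp only [one_div]
    refine (((hsqrt s hs).const_mul 2).fun_inv (mul_ne_zero two_ne_zero hne)).congr_deriv ?_
    field_simp
    ring
  have hS : 0 < softNorm ε p := Real.sqrt_pos.2 (hpos (normSq_nonneg p))
  have hS2 : softNorm ε p ^ 2 = ε ^ 2 + normSq p := Real.sq_sqrt (hpos (normSq_nonneg p)).le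
  refine (pd_pd_comp_normSq hsqrt hsqrt' v p).trans ?_
  change 4 * -(1 / (4 * softNorm ε p ^ 3)) * _ + 2 * (1 / (2 * softNorm ε p)) * _ = _
  field_simp
  linear_combination normSq v * hS2 - dot_sq_add_cross_sq p v

theorem pd_pd_softNorm_nonneg {ε : ℝ} (hε : 0 < ε) (v p : ℝ × ℝ) :
    0 ≤ pd v (pd v (softNorm ε)) p := by
  have hv := normSq_nonneg v
  have hS : 0 ≤ softNorm ε p := Real.sqrt_nonneg _
  rw [pd_pd_softNorm hε]
  positivity

theorem le_pd_pd_softNorm {ε : ℝ} (hε : 0 < ε) {p : ℝ × ℝ} (hεp : ε ≤ √(normSq p))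
    (v : ℝ × ℝ) :
    cross p v ^ 2 / (8 * √(normSq p) ^ 3) ≤ pd v (pd v (softNorm ε)) p := by
  have hS : 0 < softNorm ε p := (hε.trans_le hεp).trans_le (sqrt_normSq_le_softNorm ε p)
  have hS_le : softNorm ε p ≤ 2 * √(normSq p) := by linarith [softNorm_le_add hε.le p]
  have hS3 : softNorm ε p ^ 3 ≤ 8 * √(normSq p) ^ 3 :=
    calc softNorm ε p ^ 3 ≤ (2 * √(normSq p)) ^ 3 := by gcongr
      _ = 8 * √(normSq p) ^ 3 := by ring
  have hv := mul_nonneg (sq_nonneg ε) (normSq_nonneg v)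
  rw [pd_pd_softNorm hε]
  gcongr
  linarith

/-- The function `log (1 + R²|p|²)`, whose Laplacian is positive and concentrates near `0`. -/
def logBump (R : ℝ) (p : ℝ × ℝ) : ℝ := Real.log (1 + R ^ 2 * normSq p)

theorem one_add_sq_mul_normSq_pos (R : ℝ) (p : ℝ × ℝ) : 0 < 1 + R ^ 2 * normSq p := by
  have := normSq_nonneg p
  positivity

theorem contDiff_logBump {n : WithTop ℕ∞} (R : ℝ) : ContDiff ℝ n (logBump R) :=
  (contDiff_const.add (contDiff_const.mul contDiff_normSq)).log
    fun p => (one_add_sq_mul_normSq_pos R p).ne'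

theorem frameLaplacian_logBump (R : ℝ) (p : ℝ × ℝ) :
    frameLaplacian (1, 0) (0, 1) (logBump R) p = 4 * R ^ 2 / (1 + R ^ 2 * normSq p) ^ 2 := by
  have hpos {s : ℝ} (hs : 0 ≤ s) : 1 + R ^ 2 * s ≠ 0 := by positivity
  have hlin (s : ℝ) : HasDerivAt (fun s => 1 + R ^ 2 * s) (R ^ 2) s := by
    simpa using ((hasDerivAt_id s).const_mul (R ^ 2)).const_add 1
  have hlog (s : ℝ) (hs : 0 ≤ s) :
      HasDerivAt (fun s => Real.log (1 + R ^ 2 * s)) (R ^ 2 / (1 + R ^ 2 * s)) s :=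
    (hlin s).log (hpos hs)
  have hlog' (s : ℝ) (hs : 0 ≤ s) : HasDerivAt (fun s => R ^ 2 / (1 + R ^ 2 * s))
      (-(R ^ 4 / (1 + R ^ 2 * s) ^ 2)) s := by
    simp only [div_eq_mul_inv]
    refine (((hlin s).fun_inv (hpos hs)).const_mul (R ^ 2)).congr_deriv ?_
    ring
  have hpd (v : ℝ × ℝ) := pd_pd_comp_normSq hlog hlog' v p
  refine (congrArg₂ (· + ·) (hpd (1, 0)) (hpd (0, 1))).trans ?_
  have := hpos (normSq_nonneg p)
  field_simp
  simp only [dot, normSq]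
  ring

theorem logBump_nonneg (R : ℝ) (p : ℝ × ℝ) : 0 ≤ logBump R p :=
  Real.log_nonneg (by nlinarith [normSq_nonneg p, sq_nonneg R])

theorem logBump_le {R L : ℝ} (hR : 1 ≤ R) {p : ℝ × ℝ} (hp : normSq p ≤ L) :
    logBump R p ≤ 2 * Real.log R + Real.log (1 + L) := by
  have hL : 0 ≤ L := (normSq_nonneg p).trans hp
  calc logBump R p ≤ Real.log (R ^ 2 * (1 + L)) := by
        refine Real.log_le_log (one_add_sq_mul_normSq_pos R p) ?_
        nlinarith [mul_le_mul_of_nonneg_left hp (sq_nonneg R)]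
    _ = 2 * Real.log R + Real.log (1 + L) := by
        rw [Real.log_mul (by positivity) (by positivity), Real.log_pow, Nat.cast_ofNat]

end RadialFunctions

section ComplexLines

/-- The affine map `ζ ↦ c + ζ₁ u + ζ₂ v` of the plane. The complex line
`ζ ↦ (x + iy) + ζ (a + ib)` has real part `planeMap x a (-b)` and imaginary part
`planeMap y b a`. -/
def planeMap (c u v ζ : ℝ × ℝ) : ℝ × ℝ := c + (ζ.1 • u + ζ.2 • v)

theorem contDiff_planeMap {n : WithTop ℕ∞} (c u v : ℝ × ℝ) : ContDiff ℝ n (planeMap c u v) :=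
  contDiff_const.add ((contDiff_fst.smul contDiff_const).add (contDiff_snd.smul contDiff_const))

theorem planeMap_zero (c u v : ℝ × ℝ) : planeMap c u v 0 = c := by
  simp [planeMap]

theorem planeMap_add_smul (c u v c' u' v' ζ : ℝ × ℝ) (t : ℝ) :
    planeMap c u v ζ + t • planeMap c' u' v' ζ
      = planeMap (c + t • c') (u + t • u') (v + t • v') ζ := by
  simp only [planeMap]
  module

theorem frameLaplacian_comp_planeMap {ψ : ℝ × ℝ → ℝ} (hψ : ContDiff ℝ 2 ψ) (c u v : ℝ × ℝ) :
    frameLaplacian (1, 0) (0, 1) (ψ ∘ planeMap c u v)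
      = frameLaplacian u v ψ ∘ planeMap c u v := by
  have hL (ζ : ℝ × ℝ) : HasFDerivAt (planeMap c u v) ((ContinuousLinearMap.fst ℝ ℝ ℝ).smulRight u
      + (ContinuousLinearMap.snd ℝ ℝ ℝ).smulRight v) ζ :=
    ((hasFDerivAt_fst.smul_const u).add (hasFDerivAt_snd.smul_const v)).const_add c
  simpa using frameLaplacian_comp_affine hψ hL (1, 0) (0, 1)

theorem norm_sq_le_normSq (p : ℝ × ℝ) : ‖p‖ ^ 2 ≤ normSq p := by
  rw [Prod.norm_def, normSq]
  rcases max_choice ‖p.1‖ ‖p.2‖ with h | h <;> rw [h, Real.norm_eq_abs, sq_abs]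
  · linarith [sq_nonneg p.2]
  · linarith [sq_nonneg p.1]

theorem normSq_le_two_mul_norm_sq (p : ℝ × ℝ) : normSq p ≤ 2 * ‖p‖ ^ 2 := by
  have hfst : p.1 ^ 2 ≤ ‖p‖ ^ 2 := sq_le_sq.2 ((norm_fst_le p).trans (le_abs_self _))
  have hsnd : p.2 ^ 2 ≤ ‖p‖ ^ 2 := sq_le_sq.2 ((norm_snd_le p).trans (le_abs_self _))
  rw [normSq]
  linarith

theorem norm_planeMap_le (c u v : ℝ × ℝ) {ζ : ℝ × ℝ} (hζ : normSq ζ ≤ 1) :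
    ‖planeMap c u v ζ‖ ≤ ‖c‖ + (‖u‖ + ‖v‖) := by
  have hnorm : ‖ζ‖ ≤ 1 :=
    (sq_le_one_iff₀ (norm_nonneg ζ)).1 ((norm_sq_le_normSq ζ).trans hζ)
  calc ‖planeMap c u v ζ‖ ≤ ‖c‖ + (‖ζ.1 • u‖ + ‖ζ.2 • v‖) :=
        (norm_add_le _ _).trans (by gcongr; exact norm_add_le _ _)
    _ ≤ ‖c‖ + (‖u‖ + ‖v‖) := by
        rw [norm_smul, norm_smul]
        gcongr
        · exact mul_le_of_le_one_left (norm_nonneg u) ((norm_fst_le ζ).trans hnorm)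
        · exact mul_le_of_le_one_left (norm_nonneg v) ((norm_snd_le ζ).trans hnorm)

theorem exists_normSq_sub_le_planeMap (c : ℝ × ℝ) {u v : ℝ × ℝ} (huv : cross u v ≠ 0) :
    ∃ (p : ℝ × ℝ) (κ : ℝ), 0 ≤ κ ∧ ∀ ζ, normSq (ζ - p) ≤ κ * ‖planeMap c u v ζ‖ ^ 2 := by
  have hu := normSq_nonneg u
  have hv := normSq_nonneg v
  refine ⟨(-(cross c v / cross u v), -(cross u c / cross u v)),
    2 * (normSq u + normSq v) / cross u v ^ 2, by positivity, fun ζ => ?_⟩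
  set q := planeMap c u v ζ with hq
  have hcramer : normSq (ζ - (-(cross c v / cross u v), -(cross u c / cross u v)))
      = (cross q v ^ 2 + cross u q ^ 2) / cross u v ^ 2 := by
    have hfst : cross q v = cross c v + ζ.1 * cross u v := by
      simp only [hq, cross, planeMap, Prod.fst_add, Prod.snd_add, Prod.smul_fst, Prod.smul_snd,
        smul_eq_mul]
      ring
    have hsnd : cross u q = cross u c + ζ.2 * cross u v := by
      simp only [hq, cross, planeMap, Prod.fst_add, Prod.snd_add, Prod.smul_fst, Prod.smul_snd,
        smul_eq_mul]
      ring
    rw [hfst, hsnd]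
    simp only [normSq, Prod.fst_sub, Prod.snd_sub]
    field_simp
    ring
  calc normSq (ζ - (-(cross c v / cross u v), -(cross u c / cross u v)))
      = (cross q v ^ 2 + cross u q ^ 2) / cross u v ^ 2 := hcramer
    _ ≤ normSq q * (normSq u + normSq v) / cross u v ^ 2 := by
        gcongr
        linarith [dot_sq_add_cross_sq q v, dot_sq_add_cross_sq u q, sq_nonneg (dot q v),
          sq_nonneg (dot u q)]
    _ ≤ 2 * ‖q‖ ^ 2 * (normSq u + normSq v) / cross u v ^ 2 := by
        gcongr
        exact normSq_le_two_mul_norm_sq q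
    _ = 2 * (normSq u + normSq v) / cross u v ^ 2 * ‖q‖ ^ 2 := by ring

end ComplexLines

section TruncatedExtension

variable {Ω : ℝ × ℝ → ℝ} {R : ℝ}

/-- The extension `π EΩ(x + iy)`, with the integral truncated to `[-R, R]`. -/
def truncExt (Ω : ℝ × ℝ → ℝ) (R : ℝ) (x y : ℝ × ℝ) : ℝ :=
  ∫ t in (-R)..R, (1 + t ^ 2)⁻¹ * Ω (x + t • y)

theorem contDiff_truncExt_integrand (hΩ : ContDiff ℝ 2 Ω) (x y a b : ℝ × ℝ) :
    ContDiff ℝ 2 fun q : (ℝ × ℝ) × ℝ =>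
      (1 + q.2 ^ 2)⁻¹ * Ω (planeMap x a (-b) q.1 + q.2 • planeMap y b a q.1) :=
  (ContDiff.inv (contDiff_const.add (contDiff_snd.pow 2)) fun q => by positivity).mul
    (hΩ.comp (((contDiff_planeMap x a (-b)).comp contDiff_fst).add
      (contDiff_snd.smul ((contDiff_planeMap y b a).comp contDiff_fst))))

theorem contDiff_truncExt_comp_planeMap (hΩ : ContDiff ℝ 2 Ω) (R : ℝ) (x y a b : ℝ × ℝ) :
    ContDiff ℝ 2 fun ζ => truncExt Ω R (planeMap x a (-b) ζ) (planeMap y b a ζ) :=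
  contDiff_intervalIntegral_param (-R) R 2 (contDiff_truncExt_integrand hΩ x y a b)

/-- Along a complex line, `x + t y` depends on `ζ` through a similarity of ratio `√(1 + t²)`, so
the Poisson weight cancels. -/
theorem frameLaplacian_truncExt_comp_planeMap (hΩ : ContDiff ℝ 2 Ω) (R : ℝ) (x y a b ζ : ℝ × ℝ) :
    frameLaplacian (1, 0) (0, 1)
        (fun ζ => truncExt Ω R (planeMap x a (-b) ζ) (planeMap y b a ζ)) ζ
      = ∫ t in (-R)..R, frameLaplacian a b Ω (planeMap x a (-b) ζ + t • planeMap y b a ζ) := by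
  refine (frameLaplacian_intervalIntegral (contDiff_truncExt_integrand hΩ x y a b)
    (-R) R (1, 0) (0, 1) ζ).trans (intervalIntegral.integral_congr fun t _ => ?_)
  have hslice : (fun ζ => (1 + t ^ 2)⁻¹ * Ω (planeMap x a (-b) ζ + t • planeMap y b a ζ))
      = (1 + t ^ 2)⁻¹ • (Ω ∘ planeMap (x + t • y) (a + t • b) (-b + t • a)) :=
    funext fun ζ => by
      rw [planeMap_add_smul]
      rfl
  have hframe : frameLaplacian (a + t • b) (-b + t • a) Ω
      = (1 + t ^ 2) • frameLaplacian a b Ω := by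
    have h := frameLaplacian_conformal hΩ (c := 1) (c' := t) (d := t) (d' := -1)
      (m := 1 + t ^ 2) (by ring) (by ring) (by ring) a b
    rwa [one_smul, neg_one_smul, add_comm (t • a)] at h
  have hpos : 0 < 1 + t ^ 2 := by positivity
  refine (congrFun (congrArg (frameLaplacian (1, 0) (0, 1)) hslice) ζ).trans ?_
  rw [frameLaplacian_const_smul, frameLaplacian_comp_planeMap hΩ, hframe, planeMap_add_smul]
  exact inv_mul_cancel_left₀ hpos.ne' _

theorem intervalIntegral_comp_line_eq_integral {g : ℝ × ℝ → ℝ} {D : ℝ}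
    (hg : tsupport g ⊆ Metric.ball 0 D) {x y : ℝ × ℝ} (hxy : ‖x‖ + D ≤ R * ‖y‖) :
    ∫ t in (-R)..R, g (x + t • y) = ∫ t : ℝ, g (x + t • y) := by
  refine intervalIntegral_eq_integral_of_eq_zero fun t ht =>
    image_eq_zero_of_notMem_tsupport fun hmem => ?_
  have hlt : ‖x + t • y‖ < D := mem_ball_zero_iff.1 (hg hmem)
  have hsub : ‖t • y‖ - ‖x‖ ≤ ‖x + t • y‖ := by
    rw [add_comm]
    exact norm_sub_le_norm_add _ _
  rw [norm_smul, Real.norm_eq_abs] at hsub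
  linarith [mul_le_mul_of_nonneg_right ht (norm_nonneg y)]

theorem tsupport_frameLaplacian_subset (a b : ℝ × ℝ) (Ω : ℝ × ℝ → ℝ) :
    tsupport (frameLaplacian a b Ω) ⊆ tsupport Ω :=
  have hpd (v : ℝ × ℝ) : tsupport (pd v (pd v Ω)) ⊆ tsupport Ω :=
    (tsupport_pd_subset v _).trans (tsupport_pd_subset v Ω)
  (tsupport_add _ _).trans (Set.union_subset (hpd a) (hpd b))

theorem neg_le_integral_frameLaplacian (hΩ : ContDiff ℝ 2 Ω) (hs : HasCompactSupport Ω) {C : ℝ}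
    (hC : ∀ s θ, -C ≤ xray (pd (unitNormal θ) (pd (unitNormal θ) Ω)) s θ) (x a b : ℝ × ℝ)
    {y : ℝ × ℝ} (hy : y ≠ 0) :
    -(C * ((cross y a ^ 2 + cross y b ^ 2) / √(normSq y) ^ 3))
      ≤ ∫ t : ℝ, frameLaplacian a b Ω (x + t • y) := by
  have hint (v : ℝ × ℝ) : Integrable fun t : ℝ => pd v (pd v Ω) (x + t • y) :=
    integrable_comp_line (continuous_pd_pd hΩ v v)
      (hasCompactSupport_pd (hasCompactSupport_pd hs v) v) x hy
  simp only [frameLaplacian, Pi.add_apply]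
  rw [integral_add (hint a) (hint b), add_div, mul_add, neg_add]
  exact add_le_add (neg_le_integral_pd_pd hΩ hs hC x a hy) (neg_le_integral_pd_pd hΩ hs hC x b hy)

theorem integral_frameLaplacian_add_softNorm_nonneg (hΩ : ContDiff ℝ 2 Ω)
    (hs : HasCompactSupport Ω) {C : ℝ} (hC0 : 0 ≤ C)
    (hC : ∀ s θ, -C ≤ xray (pd (unitNormal θ) (pd (unitNormal θ) Ω)) s θ)
    {σ : ℝ} (hσ : 8 * C ≤ σ) (x a b : ℝ × ℝ) {y : ℝ × ℝ} {ε : ℝ} (hε : 0 < ε)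
    (hεy : ε ≤ √(normSq y)) :
    0 ≤ (1 / π) * (∫ t : ℝ, frameLaplacian a b Ω (x + t • y))
      + σ * frameLaplacian a b (softNorm ε) y := by
  have hy : y ≠ 0 := by
    rintro rfl
    rw [normSq_eq_zero.2 rfl, Real.sqrt_zero] at hεy
    linarith
  set W := (cross y a ^ 2 + cross y b ^ 2) / √(normSq y) ^ 3 with hW
  have hCW : 0 ≤ C * W := by positivity
  have hline : -(C * W) ≤ ∫ t : ℝ, frameLaplacian a b Ω (x + t • y) :=
    neg_le_integral_frameLaplacian hΩ hs hC x a b hy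
  have hsoft : W / 8 ≤ frameLaplacian a b (softNorm ε) y :=
    calc W / 8 = cross y a ^ 2 / (8 * √(normSq y) ^ 3)
          + cross y b ^ 2 / (8 * √(normSq y) ^ 3) := by
          rw [hW]
          field_simp
      _ ≤ _ := add_le_add (le_pd_pd_softNorm hε hεy a) (le_pd_pd_softNorm hε hεy b)
  have hσ0 : 0 ≤ σ := by linarith
  have hπ : 1 / π ≤ 1 := (div_le_one Real.pi_pos).2 (by linarith [Real.pi_gt_three])
  calc 0 ≤ (1 - 1 / π) * (C * W) := mul_nonneg (sub_nonneg.2 hπ) hCW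
    _ = (1 / π) * -(C * W) + 8 * C * (W / 8) := by ring
    _ ≤ _ := by gcongr

theorem le_frameLaplacian_logBump {M κ T K s : ℝ} {q : ℝ × ℝ} (hR : 0 < R) (hM : 0 ≤ M)
    (hκ : 0 ≤ κ) (hs : 0 ≤ s) (hsT : R * s ≤ T) (hq : normSq q ≤ κ * s ^ 2)
    (hK : M * (1 + κ * T ^ 2) ^ 2 ≤ K) :
    4 * M * R ≤ K / R * frameLaplacian (1, 0) (0, 1) (logBump R) q := by
  have hQ : 0 < 1 + R ^ 2 * normSq q := one_add_sq_mul_normSq_pos R q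
  have hQ_le : 1 + R ^ 2 * normSq q ≤ 1 + κ * T ^ 2 :=
    calc 1 + R ^ 2 * normSq q ≤ 1 + R ^ 2 * (κ * s ^ 2) := by gcongr
      _ = 1 + κ * (R * s) ^ 2 := by ring
      _ ≤ 1 + κ * T ^ 2 := by gcongr
  have hMQ : M * (1 + R ^ 2 * normSq q) ^ 2 ≤ K := le_trans (by gcongr) hK
  calc 4 * M * R = M * (1 + R ^ 2 * normSq q) ^ 2 * (4 * R) / (1 + R ^ 2 * normSq q) ^ 2 := by
        field_simp
    _ ≤ K * (4 * R) / (1 + R ^ 2 * normSq q) ^ 2 := by gcongr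
    _ = K / R * frameLaplacian (1, 0) (0, 1) (logBump R) q := by
        rw [frameLaplacian_logBump]
        field_simp

theorem neg_le_inv_pi_mul_intervalIntegral {f : ℝ → ℝ} {M : ℝ} (hM : ∀ t, |f t| ≤ M)
    (hR : 0 ≤ R) : -(4 * M * R) ≤ (1 / π) * ∫ t in (-R)..R, f t := by
  have hM0 : 0 ≤ M * R := mul_nonneg ((abs_nonneg _).trans (hM 0)) hR
  have habs : |∫ t in (-R)..R, f t| ≤ M * |R - -R| :=
    intervalIntegral.norm_integral_le_of_norm_le_const (f := f) fun t _ => hM t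
  rw [sub_neg_eq_add, abs_of_nonneg (add_nonneg hR hR)] at habs
  have hπ : 1 / π ≤ 1 := (div_le_one Real.pi_pos).2 (by linarith [Real.pi_gt_three])
  refine neg_le_of_abs_le ?_
  calc |(1 / π) * ∫ t in (-R)..R, f t| = (1 / π) * |∫ t in (-R)..R, f t| := by
        rw [abs_mul, abs_of_pos (by positivity)]
    _ ≤ 1 * |∫ t in (-R)..R, f t| := by gcongr
    _ ≤ 4 * M * R := by linarith

end TruncatedExtension

section RegularizedLine

variable {Ω : ℝ × ℝ → ℝ} {x y a b p : ℝ × ℝ} {σ K T R : ℝ}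

/-- A smooth approximation, as `R → ∞`, of the restriction of `EΩ + σ|y|` to a complex line. The
truncation may lower the Laplacian only near the real point `p` of the line, where the logarithm
makes up for it. -/
def lineReg (Ω : ℝ × ℝ → ℝ) (x y a b p : ℝ × ℝ) (σ K T R : ℝ) : ℝ × ℝ → ℝ :=
  (1 / π) • (fun ζ => truncExt Ω R (planeMap x a (-b) ζ) (planeMap y b a ζ))
    + σ • (softNorm (T / R) ∘ planeMap y b a) + (K / R) • (logBump R ∘ fun ζ => ζ - p)

theorem contDiff_smul_truncExt_comp_planeMap (hΩ : ContDiff ℝ 2 Ω) (c R : ℝ)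
    (x y a b : ℝ × ℝ) :
    ContDiff ℝ 2 (c • fun ζ => truncExt Ω R (planeMap x a (-b) ζ) (planeMap y b a ζ)) :=
  (contDiff_truncExt_comp_planeMap hΩ R x y a b).const_smul c

theorem contDiff_smul_softNorm_comp_planeMap {ε : ℝ} (hε : 0 < ε) (c : ℝ) (y u v : ℝ × ℝ) :
    ContDiff ℝ 2 (c • (softNorm ε ∘ planeMap y u v)) :=
  ((contDiff_softNorm hε).comp (contDiff_planeMap y u v)).const_smul c

theorem contDiff_smul_logBump_comp_sub (c R : ℝ) (p : ℝ × ℝ) :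
    ContDiff ℝ 2 (c • (logBump R ∘ fun ζ => ζ - p)) :=
  ((contDiff_logBump R).comp (contDiff_id.sub contDiff_const)).const_smul c

theorem contDiff_lineReg (hΩ : ContDiff ℝ 2 Ω) (x y a b p : ℝ × ℝ) (σ K : ℝ) (hT : 0 < T)
    (hR : 0 < R) : ContDiff ℝ 2 (lineReg Ω x y a b p σ K T R) :=
  ((contDiff_smul_truncExt_comp_planeMap hΩ _ R x y a b).add
    (contDiff_smul_softNorm_comp_planeMap (div_pos hT hR) σ y b a)).add
    (contDiff_smul_logBump_comp_sub _ R p)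

theorem frameLaplacian_lineReg (hΩ : ContDiff ℝ 2 Ω) (x y a b p : ℝ × ℝ) (σ K : ℝ) (hT : 0 < T)
    (hR : 0 < R) (ζ : ℝ × ℝ) :
    frameLaplacian (1, 0) (0, 1) (lineReg Ω x y a b p σ K T R) ζ
      = (1 / π) * (∫ t in (-R)..R,
          frameLaplacian a b Ω (planeMap x a (-b) ζ + t • planeMap y b a ζ))
        + σ * frameLaplacian a b (softNorm (T / R)) (planeMap y b a ζ)
        + K / R * frameLaplacian (1, 0) (0, 1) (logBump R) (ζ - p) := by
  have htrunc := contDiff_smul_truncExt_comp_planeMap hΩ (1 / π) R x y a b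
  have hsoft := contDiff_smul_softNorm_comp_planeMap (div_pos hT hR) σ y b a
  have hbump := contDiff_smul_logBump_comp_sub (K / R) R p
  have hshift : frameLaplacian (1, 0) (0, 1) (logBump R ∘ fun ζ => ζ - p)
      = frameLaplacian (1, 0) (0, 1) (logBump R) ∘ fun ζ => ζ - p :=
    frameLaplacian_comp_affine (contDiff_logBump R) (fun ζ => (hasFDerivAt_id ζ).sub_const p) _ _
  have hswap : frameLaplacian b a (softNorm (T / R)) = frameLaplacian a b (softNorm (T / R)) :=
    add_comm _ _
  unfold lineReg
  rw [frameLaplacian_add (φ := _ + _) (htrunc.add hsoft) hbump, frameLaplacian_add htrunc hsoft]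
  simp only [frameLaplacian_const_smul, Pi.add_apply, Pi.smul_apply, smul_eq_mul,
    frameLaplacian_truncExt_comp_planeMap hΩ,
    frameLaplacian_comp_planeMap (contDiff_softNorm (div_pos hT hR)), hswap, hshift,
    Function.comp_apply]

theorem frameLaplacian_lineReg_nonneg (hΩ : ContDiff ℝ 2 Ω) (hs : HasCompactSupport Ω) {C : ℝ}
    (hC0 : 0 ≤ C) (hC : ∀ s θ, -C ≤ xray (pd (unitNormal θ) (pd (unitNormal θ) Ω)) s θ)
    (hσ : 8 * C ≤ σ) {D κ M : ℝ} {ζ : ℝ × ℝ} (hD : tsupport Ω ⊆ Metric.ball 0 D)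
    (hM : ∀ q, |frameLaplacian a b Ω q| ≤ M) (hT : 0 < T) (hR : 0 < R)
    (hζ : ‖planeMap x a (-b) ζ‖ + D ≤ T) (hκ : 0 ≤ κ)
    (hp : normSq (ζ - p) ≤ κ * ‖planeMap y b a ζ‖ ^ 2) (hK : M * (1 + κ * T ^ 2) ^ 2 ≤ K) :
    0 ≤ frameLaplacian (1, 0) (0, 1) (lineReg Ω x y a b p σ K T R) ζ := by
  have hM0 : 0 ≤ M := (abs_nonneg _).trans (hM 0)
  have hε : 0 < T / R := div_pos hT hR
  rw [frameLaplacian_lineReg hΩ x y a b p σ K hT hR]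
  set X := planeMap x a (-b) ζ
  set Y := planeMap y b a ζ
  rcases le_total (T / R) ‖Y‖ with hfar | hnear
  · have hsqrt : T / R ≤ √(normSq Y) := hfar.trans (Real.le_sqrt_of_sq_le (norm_sq_le_normSq Y))
    have hTR : ‖X‖ + D ≤ R * ‖Y‖ := hζ.trans ((div_le_iff₀' hR).1 hfar)
    have hK0 : 0 ≤ K := le_trans (by positivity) hK
    have hbump : 0 ≤ K / R * frameLaplacian (1, 0) (0, 1) (logBump R) (ζ - p) := by
      rw [frameLaplacian_logBump]
      positivity
    rw [intervalIntegral_comp_line_eq_integral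
      ((tsupport_frameLaplacian_subset a b Ω).trans hD) hTR]
    exact add_nonneg
      (integral_frameLaplacian_add_softNorm_nonneg hΩ hs hC0 hC hσ X a b hε hsqrt) hbump
  · have hYT : R * ‖Y‖ ≤ T := (le_div_iff₀' hR).1 hnear
    have hbump := le_frameLaplacian_logBump hR hM0 hκ (norm_nonneg Y) hYT hp hK
    have hint := neg_le_inv_pi_mul_intervalIntegral (fun t => hM (X + t • Y)) hR.le
    have hsoft : 0 ≤ σ * frameLaplacian a b (softNorm (T / R)) Y :=
      mul_nonneg (by linarith)
        (add_nonneg (pd_pd_softNorm_nonneg hε a Y) (pd_pd_softNorm_nonneg hε b Y))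
    linarith

end RegularizedLine

section ApproximationError

variable {Ω : ℝ × ℝ → ℝ} {g : ℝ → ℝ} {M : ℝ}

theorem abs_inv_one_add_sq_mul_le (hM : ∀ t, |g t| ≤ M) (t : ℝ) :
    |(1 + t ^ 2)⁻¹ * g t| ≤ (1 + t ^ 2)⁻¹ * M := by
  have hpos : 0 < (1 + t ^ 2)⁻¹ := by positivity
  rw [abs_mul, abs_of_pos hpos]
  exact mul_le_mul_of_nonneg_left (hM t) hpos.le

theorem continuous_inv_one_add_sq_mul (hg : Continuous g) :
    Continuous fun t : ℝ => (1 + t ^ 2)⁻¹ * g t :=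
  (Continuous.inv₀ (by fun_prop) fun t => by positivity).mul hg

theorem integrable_inv_one_add_sq_mul (hg : Continuous g) (hM : ∀ t, |g t| ≤ M) :
    Integrable fun t : ℝ => (1 + t ^ 2)⁻¹ * g t :=
  (integrable_inv_one_add_sq.mul_const M).mono'
    (continuous_inv_one_add_sq_mul hg).aestronglyMeasurable
    (Filter.Eventually.of_forall (abs_inv_one_add_sq_mul_le hM))

theorem setIntegral_compl_Ioc_inv_one_add_sq {R : ℝ} (hR : 0 ≤ R) :
    ∫ t in (Set.Ioc (-R) R)ᶜ, (1 + t ^ 2)⁻¹ = π - 2 * Real.arctan R := by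
  have htotal := integral_add_compl (measurableSet_Ioc (a := -R) (b := R))
    integrable_inv_one_add_sq
  rw [← intervalIntegral.integral_of_le (by linarith), integral_inv_one_add_sq,
    integral_univ_inv_one_add_sq, Real.arctan_neg] at htotal
  linarith

theorem abs_truncated_sub_integral_le (hg : Continuous g) (hM : ∀ t, |g t| ≤ M) {R : ℝ}
    (hR : 0 ≤ R) :
    |(∫ t in (-R)..R, (1 + t ^ 2)⁻¹ * g t) - ∫ t : ℝ, (1 + t ^ 2)⁻¹ * g t|
      ≤ M * (π - 2 * Real.arctan R) := by
  rw [← integral_add_compl measurableSet_Ioc (integrable_inv_one_add_sq_mul hg hM),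
    ← intervalIntegral.integral_of_le (by linarith : -R ≤ R), sub_add_cancel_left, abs_neg]
  calc |∫ t in (Set.Ioc (-R) R)ᶜ, (1 + t ^ 2)⁻¹ * g t|
      ≤ ∫ t in (Set.Ioc (-R) R)ᶜ, (1 + t ^ 2)⁻¹ * M :=
        norm_integral_le_of_norm_le (f := fun t => (1 + t ^ 2)⁻¹ * g t)
          (integrable_inv_one_add_sq.mul_const M).integrableOn
          (Filter.Eventually.of_forall (abs_inv_one_add_sq_mul_le hM))
    _ = M * (π - 2 * Real.arctan R) := by
        rw [integral_mul_const, setIntegral_compl_Ioc_inv_one_add_sq hR, mul_comm]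

/-- The value `EΩ(x + iy) + σ|y|` of `uExt Ω σ`, as a function of two real points. -/
def realExt (Ω : ℝ × ℝ → ℝ) (σ : ℝ) (x y : ℝ × ℝ) : ℝ :=
  (1 / π) * (∫ t : ℝ, (1 + t ^ 2)⁻¹ * Ω (x + t • y)) + σ * √(normSq y)

theorem uExt_eq_realExt (Ω : ℝ × ℝ → ℝ) (σ : ℝ) (z : ℂ × ℂ) :
    uExt Ω σ z = realExt Ω σ (z.1.re, z.2.re) (z.1.im, z.2.im) := by
  simp only [uExt, realExt, normSq, div_eq_inv_mul, Prod.smul_mk, Prod.mk_add_mk, smul_eq_mul]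

theorem continuous_realExt (hΩ : Continuous Ω) (hM : ∀ p, |Ω p| ≤ M) (σ : ℝ) :
    Continuous fun q : (ℝ × ℝ) × ℝ × ℝ => realExt Ω σ q.1 q.2 := by
  have hint : Continuous fun q : (ℝ × ℝ) × ℝ × ℝ =>
      ∫ t : ℝ, (1 + t ^ 2)⁻¹ * Ω (q.1 + t • q.2) :=
    continuous_of_dominated
      (F := fun (q : (ℝ × ℝ) × ℝ × ℝ) (t : ℝ) => (1 + t ^ 2)⁻¹ * Ω (q.1 + t • q.2))
      (fun q => (continuous_inv_one_add_sq_mul (by fun_prop)).aestronglyMeasurable)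
      (fun q => Filter.Eventually.of_forall (abs_inv_one_add_sq_mul_le fun t => hM _))
      (integrable_inv_one_add_sq.mul_const M)
      (Filter.Eventually.of_forall fun t => by fun_prop)
  unfold realExt normSq
  fun_prop

theorem continuous_uExt (hΩ : Continuous Ω) (hM : ∀ p, |Ω p| ≤ M) (σ : ℝ) :
    Continuous (uExt Ω σ) := by
  have hparts : Continuous fun z : ℂ × ℂ => ((z.1.re, z.2.re), z.1.im, z.2.im) := by fun_prop
  simp only [funext (uExt_eq_realExt Ω σ)]
  exact (continuous_realExt hΩ hM σ).comp hparts

theorem abs_lineReg_sub_realExt_le (hΩ : Continuous Ω) (hM : ∀ q, |Ω q| ≤ M)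
    (x y a b : ℝ × ℝ) {p ζ : ℝ × ℝ} {σ K T R L : ℝ} (hσ : 0 ≤ σ) (hK : 0 ≤ K) (hT : 0 ≤ T)
    (hR : 1 ≤ R) (hL : normSq (ζ - p) ≤ L) :
    |lineReg Ω x y a b p σ K T R ζ - realExt Ω σ (planeMap x a (-b) ζ) (planeMap y b a ζ)|
      ≤ (1 / π) * (M * (π - 2 * Real.arctan R))
        + (σ * (T / R) + K / R * (2 * Real.log R + Real.log (1 + L))) := by
  set X := planeMap x a (-b) ζ with hX
  set Y := planeMap y b a ζ with hY
  have hR0 : 0 < R := by linarith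
  have hTR : 0 ≤ T / R := div_nonneg hT hR0.le
  have : 0 ≤ K / R := div_nonneg hK hR0.le
  have htrunc : |truncExt Ω R X Y - ∫ t : ℝ, (1 + t ^ 2)⁻¹ * Ω (X + t • Y)|
      ≤ M * (π - 2 * Real.arctan R) :=
    abs_truncated_sub_integral_le (by fun_prop) (fun t => hM _) hR0.le
  have hsoft : |softNorm (T / R) Y - √(normSq Y)| ≤ T / R := by
    rw [abs_of_nonneg (sub_nonneg.2 (sqrt_normSq_le_softNorm _ Y))]
    linarith [softNorm_le_add hTR Y]
  have hbump : |logBump R (ζ - p)| ≤ 2 * Real.log R + Real.log (1 + L) := by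
    rw [abs_of_nonneg (logBump_nonneg R _)]
    exact logBump_le hR hL
  calc |lineReg Ω x y a b p σ K T R ζ - realExt Ω σ X Y|
      = |(1 / π) * (truncExt Ω R X Y - ∫ t : ℝ, (1 + t ^ 2)⁻¹ * Ω (X + t • Y))
          + (σ * (softNorm (T / R) Y - √(normSq Y)) + K / R * logBump R (ζ - p))| := by
        congr 1
        simp only [lineReg, realExt, Pi.add_apply, Pi.smul_apply, Function.comp_apply,
          smul_eq_mul, ← hX, ← hY]
        ring
    _ ≤ (1 / π) * |truncExt Ω R X Y - ∫ t : ℝ, (1 + t ^ 2)⁻¹ * Ω (X + t • Y)|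
          + (σ * |softNorm (T / R) Y - √(normSq Y)| + K / R * |logBump R (ζ - p)|) := by
        refine (abs_add_le _ _).trans (add_le_add ?_ ((abs_add_le _ _).trans (add_le_add ?_ ?_)))
          <;> rw [abs_mul, abs_of_nonneg (by positivity)]
    _ ≤ _ := by gcongr

theorem tendsto_lineReg_error (M T K L σ : ℝ) :
    Filter.Tendsto (fun R : ℝ => (1 / π) * (M * (π - 2 * Real.arctan R))
      + (σ * (T / R) + K / R * (2 * Real.log R + L))) Filter.atTop (nhds 0) := by
  have harctan : Filter.Tendsto Real.arctan Filter.atTop (nhds (π / 2)) :=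
    tendsto_nhds_of_tendsto_nhdsWithin Real.tendsto_arctan_atTop
  have hinv : Filter.Tendsto (fun R : ℝ => R⁻¹) Filter.atTop (nhds 0) := tendsto_inv_atTop_zero
  have hlog : Filter.Tendsto (fun R : ℝ => Real.log R / R) Filter.atTop (nhds 0) :=
    Real.isLittleO_log_id_atTop.tendsto_div_nhds_zero
  have hsum := ((((harctan.const_mul 2).const_sub π).const_mul M).const_mul (1 / π)).add
    ((hinv.const_mul (σ * T)).add ((hlog.const_mul (2 * K)).add (hinv.const_mul (K * L))))
  have hzero : (1 / π) * (M * (π - 2 * (π / 2))) + (σ * T * 0 + (2 * K * 0 + K * L * 0)) = 0 := by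
    ring
  rw [hzero] at hsum
  exact hsum.congr fun R => by ring

end ApproximationError

section SubMeanValue

variable {Ω : ℝ × ℝ → ℝ} {C σ : ℝ}

theorem exists_tsupport_subset_ball {ψ : ℝ × ℝ → ℝ} (hs : HasCompactSupport ψ) :
    ∃ D, 0 < D ∧ tsupport ψ ⊆ Metric.ball 0 D := by
  obtain ⟨D, hD⟩ := hs.isCompact.isBounded.subset_ball 0
  exact ⟨max D 1, by positivity, hD.trans (Metric.ball_subset_ball (le_max_left D 1))⟩

theorem normSq_sub_le (ζ p : ℝ × ℝ) : normSq (ζ - p) ≤ 2 * normSq ζ + 2 * normSq p := by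
  simp only [normSq, Prod.fst_sub, Prod.snd_sub]
  linarith [sq_nonneg (ζ.1 + p.1), sq_nonneg (ζ.2 + p.2)]

theorem exists_subharmonic_approx_realExt (hΩ : ContDiff ℝ 2 Ω) (hs : HasCompactSupport Ω)
    (hC0 : 0 ≤ C) (hC : ∀ s θ, -C ≤ xray (pd (unitNormal θ) (pd (unitNormal θ) Ω)) s θ)
    (hσ : 8 * C ≤ σ) (x y : ℝ × ℝ) {a b : ℝ × ℝ} (hba : cross b a ≠ 0) {η : ℝ} (hη : 0 < η) :
    ∃ F : ℝ × ℝ → ℝ, ContDiff ℝ 2 F ∧ ∀ ζ, normSq ζ ≤ 1 →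
      |F ζ - realExt Ω σ (planeMap x a (-b) ζ) (planeMap y b a ζ)| ≤ η ∧
        0 ≤ frameLaplacian (1, 0) (0, 1) F ζ := by
  obtain ⟨M₀, hM₀⟩ := hΩ.continuous.bounded_above_of_compact_support hs
  obtain ⟨M, hM⟩ := (continuous_frameLaplacian hΩ a b).bounded_above_of_compact_support
    (hs.mono' ((subset_tsupport _).trans (tsupport_frameLaplacian_subset a b Ω)))
  obtain ⟨D, hD0, hD⟩ := exists_tsupport_subset_ball hs
  obtain ⟨p, κ, hκ, hp⟩ := exists_normSq_sub_le_planeMap y hba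
  set T := ‖x‖ + (‖a‖ + ‖-b‖) + D
  have hT : 0 < T := by positivity
  set K := M * (1 + κ * T ^ 2) ^ 2
  have hK : 0 ≤ K := mul_nonneg ((norm_nonneg _).trans (hM 0)) (by positivity)
  obtain ⟨R, hRη, hR⟩ := (((tendsto_lineReg_error M₀ T K
    (Real.log (1 + (2 * 1 + 2 * normSq p))) σ).eventually (gt_mem_nhds hη)).and
      (Filter.eventually_ge_atTop 1)).exists
  have hR0 : 0 < R := by linarith
  refine ⟨lineReg Ω x y a b p σ K T R, contDiff_lineReg hΩ x y a b p σ K hT hR0,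
    fun ζ hζ => ⟨?_, ?_⟩⟩
  · have hζp : normSq (ζ - p) ≤ 2 * 1 + 2 * normSq p := by linarith [normSq_sub_le ζ p]
    exact (abs_lineReg_sub_realExt_le hΩ.continuous hM₀ x y a b (by linarith) hK hT.le hR
      hζp).trans hRη.le
  · exact frameLaplacian_lineReg_nonneg hΩ hs hC0 hC hσ hD hM hT hR0
      (add_le_add_left (norm_planeMap_le x a (-b) hζ) D) hκ (hp ζ) le_rfl

theorem uExt_add_exp_smul (Ω : ℝ × ℝ → ℝ) (σ : ℝ) (z v : ℂ × ℂ) (θ : ℝ) :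
    uExt Ω σ (z + Complex.exp (θ * Complex.I) • v)
      = realExt Ω σ
        (planeMap (z.1.re, z.2.re) (v.1.re, v.2.re) (-(v.1.im, v.2.im)) (unitDir θ))
        (planeMap (z.1.im, z.2.im) (v.1.im, v.2.im) (v.1.re, v.2.re) (unitDir θ)) := by
  rw [uExt_eq_realExt]
  congr 1 <;> ext <;>
    simp [planeMap, unitDir, Complex.exp_ofReal_mul_I_re, Complex.exp_ofReal_mul_I_im,
      sub_eq_add_neg]

theorem uExt_le_circleAverage_of_cross_ne_zero (hΩ : ContDiff ℝ 2 Ω) (hs : HasCompactSupport Ω)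
    (hC0 : 0 ≤ C) (hC : ∀ s θ, -C ≤ xray (pd (unitNormal θ) (pd (unitNormal θ) Ω)) s θ)
    (hσ : 8 * C ≤ σ) (z : ℂ × ℂ) {v : ℂ × ℂ}
    (hv : cross (v.1.im, v.2.im) (v.1.re, v.2.re) ≠ 0) :
    uExt Ω σ z ≤ (1 / (2 * π)) *
      ∫ θ in (0 : ℝ)..2 * π, uExt Ω σ (z + Complex.exp (θ * Complex.I) • v) := by
  set x : ℝ × ℝ := (z.1.re, z.2.re)
  set y : ℝ × ℝ := (z.1.im, z.2.im)
  set a : ℝ × ℝ := (v.1.re, v.2.re)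
  set b : ℝ × ℝ := (v.1.im, v.2.im)
  obtain ⟨M, hM⟩ := hΩ.continuous.bounded_above_of_compact_support hs
  have hcont : Continuous fun ζ => realExt Ω σ (planeMap x a (-b) ζ) (planeMap y b a ζ) :=
    (continuous_realExt hΩ.continuous hM σ).comp
      ((contDiff_planeMap (n := 0) x a (-b)).continuous.prodMk
        (contDiff_planeMap (n := 0) y b a).continuous)
  have hmean := le_circle_integral_of_approx hcont fun η hη =>
    exists_subharmonic_approx_realExt hΩ hs hC0 hC hσ x y hv hη
  rw [planeMap_zero, planeMap_zero] at hmean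
  simp only [uExt_add_exp_smul]
  rw [uExt_eq_realExt, one_div, inv_mul_eq_div, le_div_iff₀' two_pi_pos]
  exact hmean

theorem le_circleAverage_of_dense {u : ℂ × ℂ → ℝ} (hu : Continuous u) {S : Set (ℂ × ℂ)}
    (hS : Dense S) (z : ℂ × ℂ)
    (hmean : ∀ v ∈ S, u z ≤ (1 / (2 * π)) *
      ∫ θ in (0 : ℝ)..2 * π, u (z + Complex.exp (θ * Complex.I) • v)) (v : ℂ × ℂ) :
    u z ≤ (1 / (2 * π)) *
      ∫ θ in (0 : ℝ)..2 * π, u (z + Complex.exp (θ * Complex.I) • v) := by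
  have hcont : Continuous fun v : ℂ × ℂ => (1 / (2 * π)) *
      ∫ θ in (0 : ℝ)..2 * π, u (z + Complex.exp (θ * Complex.I) • v) :=
    continuous_const.mul
      (intervalIntegral.continuous_parametric_intervalIntegral_of_continuous' (by fun_prop) _ _)
  exact (isClosed_le continuous_const hcont).closure_subset_iff.2 hmean (hS v)

theorem dense_setOf_cross_im_re_ne_zero :
    Dense {v : ℂ × ℂ | cross (v.1.im, v.2.im) (v.1.re, v.2.re) ≠ 0} := by
  intro v
  let perturb : ℝ → ℂ × ℂ := fun δ => (v.1 + δ, v.2 + δ * Complex.I)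
  open Polynomial in
  let det : ℝ[X] := C v.1.im * C v.2.re - (C v.2.im + X) * (C v.1.re + X)
  have hdet_ne : det ≠ 0 := fun h => by
    have hsecond : det.eval 1 + det.eval (-1) - 2 * det.eval 0 = -2 := by
      simp only [det, Polynomial.eval_sub, Polynomial.eval_mul, Polynomial.eval_add,
        Polynomial.eval_C, Polynomial.eval_X]
      ring
    norm_num [h] at hsecond
  have hdet (δ : ℝ) : cross ((perturb δ).1.im, (perturb δ).2.im)
      ((perturb δ).1.re, (perturb δ).2.re) = det.eval δ := by
    simp [perturb, det, cross]
  have hdense : Dense {δ | det.IsRoot δ}ᶜ :=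
    (Polynomial.finite_setOfPred_isRoot hdet_ne).countable.dense_compl ℝ
  have hperturb : Continuous perturb := by fun_prop
  have hzero : perturb 0 = v := by simp [perturb]
  rw [← hzero]
  exact map_mem_closure hperturb (hdense 0) fun δ hδ => (hdet δ).trans_ne hδ

theorem psh_uExt (hΩ : ContDiff ℝ 2 Ω) (hs : HasCompactSupport Ω) (hC0 : 0 ≤ C)
    (hC : ∀ s θ, -C ≤ xray (pd (unitNormal θ) (pd (unitNormal θ) Ω)) s θ) (hσ : 8 * C ≤ σ) :
    Psh (uExt Ω σ) := by
  obtain ⟨M, hM⟩ := hΩ.continuous.bounded_above_of_compact_support hs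
  exact fun z => le_circleAverage_of_dense (continuous_uExt hΩ.continuous hM σ)
    dense_setOf_cross_im_re_ne_zero z fun v hv =>
      uExt_le_circleAverage_of_cross_ne_zero hΩ hs hC0 hC hσ z hv

end SubMeanValue

theorem qOf_zero : qOf 0 = 0 := by
  have hinvSq : invSq 0 = 0 := funext fun p => mul_zero _
  simp [qOf, hinvSq, xray]

theorem qOf_nonneg {ψ : ℝ × ℝ → ℝ} (hneg : ∀ p, ψ p ≤ 0) : 0 ≤ qOf ψ :=
  neg_nonneg.2 (Real.iInf_nonpos fun _ => integral_nonpos fun _ =>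
    mul_nonpos_of_nonneg_of_nonpos (by positivity) (hneg _))

theorem psh_constant_radial_integrals_general {Creg Cgr σ : ℝ} {ω : ℕ → ℝ × ℝ → ℝ}
    (hω : ∀ k, 1 ≤ k → ContDiff ℝ 3 (ω k)) (hneg : ∀ k, 1 ≤ k → ∀ p, ω k p ≤ 0)
    (hfin : ∃ N, ∀ k, N ≤ k → ω k = 0) (hsupp : ∀ k, 1 ≤ k → tsupport (ω k) ⊆ annulus k)
    (hKN : ∀ k, 1 ≤ k → KNle (ω k) Creg) (hsum : ∑' k : ℕ, qOf (ω (k + 1)) ≤ Cgr)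
    (hq : ∀ k, 1 ≤ k → ∀ θ : ℝ, xray (invSq (ω k)) 0 θ = -qOf (ω k))
    (hσ : 8 * (Cgr + 1024 * Creg) ≤ σ) :
    Psh (uExt (fun p => ∑' k : ℕ, ω (k + 1) p) σ) := by
  obtain ⟨N, hN⟩ := hfin
  have hpos (k : ℕ) : 1 ≤ k + 1 := Nat.le_add_left 1 k
  have hzero (k : ℕ) (hk : k ∉ Finset.range N) : ω (k + 1) = 0 :=
    hN _ (by rw [Finset.mem_range] at hk; omega)
  have hΩ : (fun p => ∑' k : ℕ, ω (k + 1) p) = fun p => ∑ k ∈ Finset.range N, ω (k + 1) p :=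
    funext fun p => tsum_eq_sum fun k hk => by rw [hzero k hk, Pi.zero_apply]
  have hcompact : HasCompactSupport fun p => ∑ k ∈ Finset.range N, ω (k + 1) p := by
    rw [← Finset.sum_fn]
    exact Finset.sum_induction _ HasCompactSupport (fun _ _ => HasCompactSupport.add)
      HasCompactSupport.zero
      fun k _ => hasCompactSupport_of_tsupport_subset_annulus (hsupp _ (hpos k))
  have hCreg : 0 ≤ Creg := (hKN 1 le_rfl).nonneg
  have hCgr : 0 ≤ Cgr := (tsum_nonneg fun k => qOf_nonneg (hneg _ (hpos k))).trans hsum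
  rw [tsum_eq_sum fun k hk => by rw [hzero k hk, qOf_zero]] at hsum
  rw [hΩ]
  exact psh_uExt (ContDiff.sum fun k _ => (hω _ (hpos k)).of_le (by norm_num))
    hcompact (by positivity)
    (neg_le_xray_pd_pd_sum (fun k => hω _ (hpos k)) (fun k => hneg _ (hpos k))
      (fun k => hsupp _ (hpos k)) (fun k => hKN _ (hpos k)) (fun k => hq _ (hpos k)) hsum) hσ

/-- If in addition each `θ ↦ T(|x|⁻²ω_k)(0,θ)` is constant (equal to `−q_k`), then
`Eω + σ|y|` is plurisubharmonic for all `σ ≥ σ₀`, where `σ₀` depends only on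
`C_reg` and `C_gr`. -/
theorem psh_constant_radial_integrals (Creg Cgr : ℝ) (hCreg : 0 ≤ Creg) (hCgr : 0 ≤ Cgr) :
    ∃ σ₀ : ℝ, 0 ≤ σ₀ ∧ ∀ ω : ℕ → ℝ × ℝ → ℝ,
      (∀ k, 1 ≤ k → ContDiff ℝ (⊤ : ℕ∞) (ω k)) →
      (∀ k, 1 ≤ k → HasCompactSupport (ω k)) →
      (∀ k, 1 ≤ k → ∀ p, ω k p ≤ 0) →
      (∃ N, ∀ k, N ≤ k → ω k = 0) →
      (∀ k, 1 ≤ k → tsupport (ω k) ⊆ annulus k) →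
      (∀ k, 1 ≤ k → KNle (ω k) Creg) →
      (∑' k : ℕ, qOf (ω (k + 1))) ≤ Cgr →
      (∀ k, 1 ≤ k → ∀ θ : ℝ, xray (invSq (ω k)) 0 θ = -qOf (ω k)) →
      ∀ σ : ℝ, σ₀ ≤ σ → Psh (uExt (fun p => ∑' k : ℕ, ω (k + 1) p) σ) :=
  ⟨8 * (Cgr + 1024 * Creg), by positivity, fun _ hω _ hneg hfin hsupp hKN hsum hq _ hσ =>
    psh_constant_radial_integrals_general
      (fun k hk => (hω k hk).of_le (WithTop.coe_le_coe.2 le_top)) hneg hfin hsupp hKN hsum hq hσ⟩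

end
end

section
/- Let 0 < ρ₀ ≤ ρ₁, ν ∈ (0,1/10), and assume Y ⊂ ℝ is ν-porous on scales ρ₀ to ρ₁. Let I ⊂ ℝ be an interval of length |I| ≤ ρ₁. Then the Lebesgue measure of Y ∩ I satisfies |Y ∩ I| ≤ |I|^δ ρ₀^{1−δ}, where δ := log 2/(log 2 − log(1−ν)) ∈ (0,1). -/
open MeasureTheory Real

noncomputable section

/-- `Y ⊆ ℝ` is `ν`-porous on scales `ρ₀` to `ρ₁`: every interval of length
`R ∈ [ρ₀, ρ₁]` contains a point `x` with `Y ∩ (x − νR, x + νR) = ∅`. -/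
def Porous1 (ν ρ₀ ρ₁ : ℝ) (Y : Set ℝ) : Prop :=
  ∀ a b : ℝ, b - a ∈ Set.Icc ρ₀ ρ₁ →
    ∃ x ∈ Set.Icc a b, Y ∩ Set.Ioo (x - ν * (b - a)) (x + ν * (b - a)) = ∅

/-!
A gap of proportion `ν` in an interval of length `R ≥ ρ₀` leaves two pieces of total length at most
`(1 - ν) R`. The exponent `δ` is chosen so that `2 ((1 - ν) / 2) ^ δ = 1`; by concavity of
`t ↦ t ^ δ` the sum of the `δ`-th powers of the lengths then never increases when an interval is
replaced by its two pieces. Each split costs a length of at least `ν ρ₀`, so finitely many splits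
bring every piece below `ρ₀`, where `t ≤ t ^ δ * ρ₀ ^ (1 - δ)`.
-/

section Exponent

/-- The least exponent `δ` for which splitting an interval in two with a loss of a proportion `ν` of
its length never increases the sum of the `δ`-th powers of the lengths. Intended for `0 < ν < 1`;
from `ν = 1` on, `Real.log (1 - ν)` takes junk values. -/
def porosityExponent (ν : ℝ) : ℝ :=
  log 2 / (log 2 - log (1 - ν))

variable {ν : ℝ}

lemma porosityExponent_mem_Ioo (hν : ν ∈ Set.Ioo 0 1) : porosityExponent ν ∈ Set.Ioo 0 1 := by
  have log_two_pos : 0 < log 2 := log_pos one_lt_two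
  have log_one_sub_neg : log (1 - ν) < 0 := log_neg (by linarith [hν.2]) (by linarith [hν.1])
  have den_pos : 0 < log 2 - log (1 - ν) := by linarith
  exact ⟨div_pos log_two_pos den_pos, (div_lt_one den_pos).2 (by linarith)⟩

lemma porosityExponent_eq_logb (hν : ν < 1) :
    porosityExponent ν = logb ((1 - ν) / 2) (1 / 2) := by
  rw [porosityExponent, logb, log_div (sub_pos.2 hν).ne' two_ne_zero, one_div, log_inv,
    ← neg_sub (log 2), neg_div_neg_eq]

lemma one_sub_div_two_rpow_porosityExponent (hν : ν ∈ Set.Ioo 0 1) :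
    ((1 - ν) / 2) ^ porosityExponent ν = 1 / 2 := by
  obtain ⟨ν_pos, ν_lt_one⟩ := hν
  rw [porosityExponent_eq_logb ν_lt_one]
  exact rpow_logb (by linarith) (by linarith) (by norm_num)

lemma rpow_add_rpow_le_two_mul_rpow {l m p : ℝ} (hl : 0 ≤ l) (hm : 0 ≤ m) (hp₀ : 0 ≤ p)
    (hp₁ : p ≤ 1) : l ^ p + m ^ p ≤ 2 * ((l + m) / 2) ^ p := by
  have midpoint_concave : 1 / 2 * l ^ p + 1 / 2 * m ^ p ≤ (1 / 2 * l + 1 / 2 * m) ^ p :=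
    (concaveOn_rpow hp₀ hp₁).2 (Set.mem_Ici.2 hl) (Set.mem_Ici.2 hm) (by norm_num) (by norm_num)
      (by norm_num)
  rw [← mul_add, ← mul_add, one_div_mul_eq_div, one_div_mul_eq_div] at midpoint_concave
  linarith

lemma rpow_porosityExponent_add_le (hν : ν ∈ Set.Ioo 0 1) {l m R : ℝ} (hl : 0 ≤ l) (hm : 0 ≤ m)
    (hlm : l + m ≤ (1 - ν) * R) :
    l ^ porosityExponent ν + m ^ porosityExponent ν ≤ R ^ porosityExponent ν := by
  obtain ⟨δ_pos, δ_lt_one⟩ := porosityExponent_mem_Ioo hν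
  have one_sub_pos : 0 < 1 - ν := sub_pos.2 hν.2
  have R_nonneg : 0 ≤ R := nonneg_of_mul_nonneg_right ((add_nonneg hl hm).trans hlm) one_sub_pos
  calc l ^ porosityExponent ν + m ^ porosityExponent ν
      ≤ 2 * ((l + m) / 2) ^ porosityExponent ν :=
        rpow_add_rpow_le_two_mul_rpow hl hm δ_pos.le δ_lt_one.le
    _ ≤ 2 * ((1 - ν) / 2 * R) ^ porosityExponent ν := by
        gcongr
        linarith
    _ = R ^ porosityExponent ν := by
        rw [mul_rpow (by positivity) R_nonneg, one_sub_div_two_rpow_porosityExponent hν]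
        ring

lemma le_rpow_mul_rpow_one_sub {t ρ p : ℝ} (ht : 0 ≤ t) (htρ : t ≤ ρ) (hp : p ≤ 1) :
    t ≤ t ^ p * ρ ^ (1 - p) := by
  calc t = t ^ p * t ^ (1 - p) := by
        rw [← rpow_add' ht (by norm_num), add_sub_cancel, rpow_one]
    _ ≤ t ^ p * ρ ^ (1 - p) := by
        gcongr

end Exponent

lemma measure_inter_Icc_le_add_of_inter_Ioo_eq_empty {α : Type*} [LinearOrder α]
    [MeasurableSpace α] (μ : Measure α) {Y : Set α} (a b : α) {c d : α}
    (h : Y ∩ Set.Ioo c d = ∅) :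
    μ (Y ∩ Set.Icc a b) ≤ μ (Y ∩ Set.Icc a c) + μ (Y ∩ Set.Icc d b) := by
  refine (measure_mono ?_).trans (measure_union_le _ _)
  rintro y ⟨hyY, hay, hyb⟩
  rcases le_or_gt y c with hyc | hcy
  · exact Or.inl ⟨hyY, hay, hyc⟩
  rcases le_or_gt d y with hdy | hyd
  · exact Or.inr ⟨hyY, hdy, hyb⟩
  · exact (h.subset ⟨hyY, hcy, hyd⟩).elim

namespace Porous1

variable {ν ρ₀ ρ₁ a b : ℝ} {Y : Set ℝ}

-- Porosity gives a gap of length `2ν(b - a)`, but up to half of it may lie outside `[a, b]`.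
lemma exists_gap (hY : Porous1 ν ρ₀ ρ₁ Y) (hν : ν ∈ Set.Icc 0 1)
    (hlen : b - a ∈ Set.Icc ρ₀ ρ₁) :
    ∃ c d, a ≤ c ∧ c + ν * (b - a) ≤ d ∧ d ≤ b ∧ Y ∩ Set.Ioo c d = ∅ := by
  obtain ⟨x, ⟨hax, hxb⟩, hxY⟩ := hY a b hlen
  have radius_nonneg : 0 ≤ ν * (b - a) := mul_nonneg hν.1 (by linarith)
  have radius_le : ν * (b - a) ≤ b - a := mul_le_of_le_one_left (by linarith) hν.2
  refine ⟨max a (x - ν * (b - a)), min b (x + ν * (b - a)), le_max_left _ _, ?_, min_le_left _ _,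
    Set.subset_empty_iff.1 (hxY ▸ ?_)⟩
  · rw [max_add, max_le_iff, le_min_iff, le_min_iff]
    refine ⟨⟨?_, ?_⟩, ?_, ?_⟩ <;> linarith
  · gcongr
    exacts [le_max_right _ _, min_le_right _ _]

lemma measure_inter_Icc_le_of_split (hY : Porous1 ν ρ₀ ρ₁ Y) (hν : ν ∈ Set.Ioc 0 1)
    (hρ₀ : 0 < ρ₀) (μ : Measure ℝ) {φ : ℝ → ENNReal}
    (hshort : ∀ a b, a ≤ b → b - a ≤ ρ₀ → μ (Set.Icc a b) ≤ φ (b - a))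
    (hsplit : ∀ l m R, 0 ≤ l → 0 ≤ m → l + m ≤ (1 - ν) * R → φ l + φ m ≤ φ R)
    (hab : a ≤ b) (hlen : b - a ≤ ρ₁) : μ (Y ∩ Set.Icc a b) ≤ φ (b - a) := by
  have loss_pos : 0 < ν * ρ₀ := mul_pos hν.1 hρ₀
  obtain ⟨n, hn⟩ : ∃ n : ℕ, b - a ≤ n * (ν * ρ₀) := by
    simpa only [nsmul_eq_mul] using Archimedean.arch (b - a) loss_pos
  induction n generalizing a b with
  | zero =>
    refine (measure_mono Set.inter_subset_right).trans (hshort a b hab ?_)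
    simp only [Nat.cast_zero, zero_mul] at hn
    exact hn.trans hρ₀.le
  | succ n ih =>
    rcases le_total (b - a) ρ₀ with short | long
    · exact (measure_mono Set.inter_subset_right).trans (hshort a b hab short)
    obtain ⟨c, d, hac, hcd, hdb, gap⟩ := hY.exists_gap ⟨hν.1.le, hν.2⟩ ⟨long, hlen⟩
    have loss_le : ν * ρ₀ ≤ ν * (b - a) := mul_le_mul_of_nonneg_left long hν.1.le
    push_cast at hn
    calc μ (Y ∩ Set.Icc a b)
        ≤ μ (Y ∩ Set.Icc a c) + μ (Y ∩ Set.Icc d b) :=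
          measure_inter_Icc_le_add_of_inter_Ioo_eq_empty μ a b gap
      _ ≤ φ (c - a) + φ (b - d) :=
          add_le_add (ih hac (by linarith) (by linarith)) (ih hdb (by linarith) (by linarith))
      _ ≤ φ (b - a) :=
          hsplit _ _ _ (sub_nonneg.2 hac) (sub_nonneg.2 hdb) (by linarith)

end Porous1

theorem porosity_count_1D_general {ρ₀ ρ₁ ν : ℝ} (hρ₀ : 0 < ρ₀) (hν : ν ∈ Set.Ioo 0 1)
    {Y : Set ℝ} (hY : Porous1 ν ρ₀ ρ₁ Y) {a b : ℝ} (hab : a ≤ b) (hlen : b - a ≤ ρ₁) :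
    volume (Y ∩ Set.Icc a b) ≤
      ENNReal.ofReal ((b - a) ^ porosityExponent ν * ρ₀ ^ (1 - porosityExponent ν)) := by
  refine hY.measure_inter_Icc_le_of_split ⟨hν.1, hν.2.le⟩ hρ₀ volume
    (φ := fun t ↦ ENNReal.ofReal (t ^ porosityExponent ν * ρ₀ ^ (1 - porosityExponent ν)))
    (fun a b hab short ↦ ?short) (fun l m R hl hm hlm ↦ ?split) hab hlen
  case short =>
    rw [volume_Icc]
    exact ENNReal.ofReal_le_ofReal <| le_rpow_mul_rpow_one_sub (sub_nonneg.2 hab) short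
      (porosityExponent_mem_Ioo hν).2.le
  case split =>
    rw [← ENNReal.ofReal_add (by positivity) (by positivity), ← add_mul]
    gcongr
    exact rpow_porosityExponent_add_le hν hl hm hlm

/-- Measure bound for one-dimensional porous sets:
`|Y ∩ I| ≤ |I|^δ ρ₀^{1−δ}` with `δ = log 2 / (log 2 − log(1−ν))`. -/
theorem porosity_count_1D (ρ₀ ρ₁ ν : ℝ) (hρ₀ : 0 < ρ₀) (hρ : ρ₀ ≤ ρ₁)
    (hν : ν ∈ Set.Ioo 0 (1/10)) (Y : Set ℝ) (hY : Porous1 ν ρ₀ ρ₁ Y)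
    (a b : ℝ) (hab : a ≤ b) (hlen : b - a ≤ ρ₁) :
    volume (Y ∩ Set.Icc a b) ≤
      ENNReal.ofReal ((b - a) ^ (Real.log 2 / (Real.log 2 - Real.log (1 - ν))) *
        ρ₀ ^ (1 - Real.log 2 / (Real.log 2 - Real.log (1 - ν)))) :=
  porosity_count_1D_general hρ₀ ⟨hν.1, by linarith [hν.2]⟩ hY hab hlen

end
end

section
/- Let ν ∈ (0,1/10) and 0 < ρ₀ ≤ ρ₁. There exist constants C > 0 and δ ∈ (0,1) depending only on ν with the following property. Assume 𝐘 ⊂ ℝ² is ν-porous on lines on scales ρ₀ to ρ₁, let ρ₀ ≤ r₀ ≤ r₁ ≤ ρ₁, let τ ⊂ ℝ² be a line segment of length r₁, and let S ⊂ 𝐘 be an r₀-separated set (i.e. |x − x'| > r₀ for all distinct x, x' ∈ S). Then the number of points of S in the neighborhood τ + B(0,2r₀) satisfies #(S ∩ (τ + B(0,2r₀))) ≤ C (r₁/r₀)^δ. -/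
open MeasureTheory Real Pointwise

noncomputable section

/-- `Y ⊆ ℝ²` is `ν`-porous on lines on scales `ρ₀` to `ρ₁`: every line segment of length
`R ∈ [ρ₀, ρ₁]` contains a point `x` with `Y ∩ B(x, νR) = ∅`. -/
def LinePorous (ν ρ₀ ρ₁ : ℝ) (Y : Set (EuclideanSpace ℝ (Fin 2))) : Prop :=
  ∀ a b : EuclideanSpace ℝ (Fin 2), dist a b ∈ Set.Icc ρ₀ ρ₁ →
    ∃ x ∈ segment ℝ a b, Y ∩ Metric.ball x (ν * dist a b) = ∅

/-! Let `S` be `r`-separated. A hole of `S` of radius `ν * dist a b` centered on `[a, b]` leaves two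
subsegments of total length at most `(1 - ν / 2) * dist a b` whose neighborhoods still cover the
points of `S` near `[a, b]`, as soon as `dist a b` is large compared with `r`. Splitting repeatedly,
one arrives at segments of length `O(r)`, near each of which a packing bound leaves `O(1)` points.
If `δ < 1` is such that `((1 - ν / 4) / 2) ^ δ = 1 / 2`, concavity of `x ↦ x ^ δ` shows that a split
does not increase the sum of `(dist a b + r) ^ δ` over the segments. The shift by `r` keeps this sum
at least `r ^ δ` times the number of segments even if some of them are degenerate; it is paid for by
weakening `1 - ν / 2` to `1 - ν / 4`. -/

open Set Metric AffineMap

section Packing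

theorem packingNumber_ne_top_of_totallyBounded {X : Type*} [PseudoEMetricSpace X] {A : Set X}
    (hA : TotallyBounded A) {ε : NNReal} (hε : ε ≠ 0) : packingNumber ε A ≠ ⊤ := by
  obtain ⟨C, -, hC, hcover⟩ := exists_finite_isCover_of_totallyBounded (half_pos hε.bot_lt).ne' hA
  refine ne_top_of_le_ne_top hC.encard_lt_top.ne ?_
  calc packingNumber ε A
      = packingNumber (2 * (ε / 2)) A := by rw [mul_div_cancel₀ ε two_ne_zero]
    _ ≤ externalCoveringNumber (ε / 2) A := packingNumber_two_mul_le_externalCoveringNumber _ _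
    _ ≤ C.encard := hcover.externalCoveringNumber_le_encard

theorem finite_of_totallyBounded_of_pairwise_lt_dist {X : Type*} [PseudoMetricSpace X] {S : Set X}
    (hS : TotallyBounded S) {r : ℝ} (hr : 0 < r) (hsep : S.Pairwise (r < dist · ·)) :
    S.Finite := by
  have hsep' : IsSeparated r.toNNReal S := hsep.imp fun x y hxy => by
    rw [edist_dist]
    exact (ENNReal.ofReal_lt_ofReal_iff_of_nonneg hr.le).2 hxy
  exact encard_ne_top_iff.1 <| ne_top_of_le_ne_top
    (packingNumber_ne_top_of_totallyBounded hS (toNNReal_pos.2 hr).ne')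
    (hsep'.encard_le_packingNumber Subset.rfl)

theorem exists_encard_le_of_pairwise_lt_dist (E : Type*) [SeminormedAddCommGroup E]
    [NormedSpace ℝ E] [ProperSpace E] (K : ℝ) :
    ∃ N : ℕ, ∀ r > 0, ∀ (a : E) (S : Set E), S ⊆ closedBall a (K * r) →
      S.Pairwise (r < dist · ·) → S.encard ≤ N := by
  obtain ⟨N, hN⟩ := ENat.ne_top_iff_exists.1 <| packingNumber_ne_top_of_totallyBounded
    (isCompact_closedBall (0 : E) K).totallyBounded one_ne_zero
  refine ⟨N, fun r hr a S hS hsep => ?_⟩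
  have hdist (x y : E) : dist (r⁻¹ • (x - a)) (r⁻¹ • (y - a)) = dist x y / r := by
    rw [dist_smul₀, dist_sub_right, norm_inv, norm_of_nonneg hr.le, inv_mul_eq_div]
  have hinj : InjOn (fun x => r⁻¹ • (x - a)) S := by
    intro x hx y hy (hxy : r⁻¹ • (x - a) = r⁻¹ • (y - a))
    by_contra hne
    have : dist x y / r = 0 := by rw [← hdist, hxy, dist_self]
    linarith [(one_lt_div hr).2 (hsep hx hy hne)]
  rw [hN, ← hinj.encard_image]
  refine IsSeparated.encard_le_packingNumber ?_ ?_
  · rintro _ ⟨x, hx, rfl⟩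
    have := hdist x a
    rw [sub_self, smul_zero] at this
    rw [mem_closedBall, this, div_le_iff₀ hr]
    exact hS hx
  · refine (hinj.pairwise_image).2 fun x hx y hy hxy => ?_
    have : 1 < dist x y / r := (one_lt_div hr).2 (hsep hx hy hxy)
    simpa [Function.onFun, edist_dist, hdist] using this

end Packing

section Recursion

theorem exists_forall_rpow_add_rpow_le {κ : ℝ} (hκ₀ : 0 < κ) (hκ₁ : κ < 1) :
    ∃ δ ∈ Ioo (0 : ℝ) 1, ∀ x y z : ℝ, 0 ≤ x → 0 ≤ y → x + y ≤ κ * z →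
      x ^ δ + y ^ δ ≤ z ^ δ := by
  have hδ₀ : 0 < logb (κ / 2) (1 / 2) :=
    logb_pos_of_base_lt_one (by linarith) (by linarith) (by norm_num) (by norm_num)
  have hδ₁ : logb (κ / 2) (1 / 2) < 1 := by
    rw [logb_lt_iff_lt_rpow_of_base_lt_one (by linarith) (by linarith) (by norm_num), rpow_one]
    linarith
  have hκδ : (κ / 2) ^ logb (κ / 2) (1 / 2) = 1 / 2 :=
    rpow_logb (by linarith) (by linarith) (by norm_num)
  generalize logb (κ / 2) (1 / 2) = δ at hδ₀ hδ₁ hκδ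
  refine ⟨δ, ⟨hδ₀, hδ₁⟩, fun x y z hx hy hxyz => ?_⟩
  have hz : 0 ≤ z := nonneg_of_mul_nonneg_right (by linarith) hκ₀
  have hconcave : 1 / 2 * x ^ δ + 1 / 2 * y ^ δ ≤ (1 / 2 * x + 1 / 2 * y) ^ δ :=
    (concaveOn_rpow hδ₀.le hδ₁.le).2 hx hy (by norm_num) (by norm_num) (by norm_num)
  calc x ^ δ + y ^ δ
      ≤ 2 * (1 / 2 * x + 1 / 2 * y) ^ δ := by linarith
    _ ≤ 2 * (κ / 2 * z) ^ δ := by gcongr; linarith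
    _ = z ^ δ := by rw [mul_rpow (by positivity) hz, hκδ]; ring

theorem le_mul_rpow_of_le_or_le_add {α : Type*} {F w : α → ℝ} {κ δ N W r : ℝ} (hr : 0 < r)
    (hκ : κ ≤ 1) (hδ : 0 ≤ δ) (hN : 0 ≤ N) (hw : ∀ a, r ≤ w a)
    (hadd : ∀ x y z : ℝ, 0 ≤ x → 0 ≤ y → x + y ≤ κ * z → x ^ δ + y ^ δ ≤ z ^ δ)
    (hF : ∀ a, w a ≤ W → F a ≤ N ∨ ∃ b c, w b + w c ≤ κ * w a ∧ F a ≤ F b + F c)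
    {a : α} (ha : w a ≤ W) : F a ≤ N * (w a / r) ^ δ := by
  obtain ⟨n, hn⟩ := exists_nat_ge (w a / r)
  rw [div_le_iff₀ hr] at hn
  induction n generalizing a with
  | zero =>
    rw [Nat.cast_zero, zero_mul] at hn
    linarith [hw a]
  | succ n ih =>
    have hwr (a : α) : 1 ≤ w a / r := (one_le_div hr).2 (hw a)
    rcases hF a ha with hbase | ⟨b, c, hbc, hsplit⟩
    · exact hbase.trans (le_mul_of_one_le_right hN (one_le_rpow (hwr a) hδ))
    have hκw : κ * w a ≤ w a := mul_le_of_le_one_left (hr.le.trans (hw a)) hκ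
    push_cast at hn
    have hb : F b ≤ N * (w b / r) ^ δ := ih (by linarith [hw c]) (by linarith [hw c])
    have hc : F c ≤ N * (w c / r) ^ δ := ih (by linarith [hw b]) (by linarith [hw b])
    calc F a ≤ N * ((w b / r) ^ δ + (w c / r) ^ δ) := by linarith
      _ ≤ N * (w a / r) ^ δ := by
        gcongr
        refine hadd _ _ _ (by linarith [hwr b]) (by linarith [hwr c]) ?_
        rw [← add_div, ← mul_div_assoc]
        gcongr

end Recursion

section Segment

theorem lineMap_mem_segment_lineMap {𝕜 V : Type*} [Field 𝕜] [LinearOrder 𝕜] [IsStrictOrderedRing 𝕜]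
    [AddCommGroup V] [Module 𝕜 V] (a b : V) {u s v : 𝕜} (hus : u ≤ s) (hsv : s ≤ v) :
    lineMap a b s ∈ segment 𝕜 (lineMap a b u) (lineMap a b v) := by
  rw [← image_segment, segment_eq_Icc (hus.trans hsv)]
  exact mem_image_of_mem _ ⟨hus, hsv⟩

theorem thickening_diff_ball_subset {X : Type*} [PseudoMetricSpace X] (A : Set X) (x : X)
    (s η : ℝ) : thickening s A \ ball x (η + s) ⊆ thickening s (A \ closedBall x η) := by
  rintro z ⟨hz, hzx⟩
  obtain ⟨y, hyA, hzy⟩ := mem_thickening_iff.1 hz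
  refine mem_thickening_iff.2 ⟨y, ⟨hyA, fun hyx => hzx ?_⟩, hzy⟩
  exact (dist_triangle z y x).trans_lt (by linarith [mem_closedBall.1 hyx])

variable {E : Type*} [SeminormedAddCommGroup E] [NormedSpace ℝ E]

theorem thickening_segment_subset_closedBall (a b : E) (s : ℝ) :
    thickening s (segment ℝ a b) ⊆ closedBall a (dist a b + s) := by
  intro z hz
  obtain ⟨y, hy, hzy⟩ := mem_thickening_iff.1 hz
  have hya : dist y a ≤ dist a b := segment_subset_closedBall_left a b hy
  exact (dist_triangle z y a).trans (by linarith)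

theorem exists_segment_diff_closedBall_subset {a b x : E} (hx : x ∈ segment ℝ a b) {η : ℝ}
    (hη₀ : 0 ≤ η) (hη₁ : η ≤ 1) :
    ∃ p q : E, dist a p + dist q b ≤ (1 - η) * dist a b ∧
      segment ℝ a b \ closedBall x (η * dist a b) ⊆ segment ℝ a p ∪ segment ℝ q b := by
  rw [segment_eq_image_lineMap] at hx ⊢
  obtain ⟨t, ⟨ht₀, ht₁⟩, rfl⟩ := hx
  refine ⟨lineMap a b (max 0 (t - η)), lineMap a b (min 1 (t + η)), ?_, ?_⟩
  · rw [dist_left_lineMap, dist_lineMap_right, ← add_mul, norm_of_nonneg (le_max_left _ _),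
      norm_of_nonneg (sub_nonneg.2 (min_le_left _ _))]
    gcongr
    grind
  · rintro _ ⟨⟨s, ⟨hs₀, hs₁⟩, rfl⟩, hs⟩
    rw [mem_closedBall, dist_lineMap_lineMap, not_le] at hs
    have hst : η < |s - t| := lt_of_mul_lt_mul_right hs dist_nonneg
    rcases lt_abs.1 hst with hright | hleft
    · right
      simpa using lineMap_mem_segment_lineMap a b
        ((min_le_right 1 (t + η)).trans (by linarith : t + η ≤ s)) hs₁
    · left
      simpa using lineMap_mem_segment_lineMap a b hs₀
        ((by linarith : s ≤ t - η).trans (le_max_right 0 (t - η)))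

theorem exists_ncard_inter_thickening_segment_le_add {S : Set E} {s ν : ℝ}
    (hfin : ∀ c d : E, (S ∩ thickening s (segment ℝ c d)).Finite) (hν₀ : 0 ≤ ν) (hν₁ : ν ≤ 2)
    {a b x : E} (hs : 2 * s ≤ ν * dist a b) (hx : x ∈ segment ℝ a b)
    (hhole : Disjoint S (ball x (ν * dist a b))) :
    ∃ p q : E, dist a p + dist q b ≤ (1 - ν / 2) * dist a b ∧
      (S ∩ thickening s (segment ℝ a b)).ncard ≤
        (S ∩ thickening s (segment ℝ a p)).ncard + (S ∩ thickening s (segment ℝ q b)).ncard := by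
  obtain ⟨p, q, hpq, hsub⟩ := exists_segment_diff_closedBall_subset hx
    (div_nonneg hν₀ zero_le_two) ((div_le_one zero_lt_two).2 hν₁)
  refine ⟨p, q, hpq, ?_⟩
  have hball : ball x (ν / 2 * dist a b + s) ⊆ ball x (ν * dist a b) :=
    ball_subset_ball (by linarith)
  have hcover : S ∩ thickening s (segment ℝ a b) ⊆
      S ∩ thickening s (segment ℝ a p) ∪ S ∩ thickening s (segment ℝ q b) := by
    rw [← inter_union_distrib_left, ← thickening_union]
    rintro z ⟨hzS, hz⟩
    exact ⟨hzS, thickening_subset_of_subset s hsub <| thickening_diff_ball_subset _ x s _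
      ⟨hz, fun hzx => hhole.le_bot ⟨hzS, hball hzx⟩⟩⟩
  exact (ncard_le_ncard hcover ((hfin a p).union (hfin q b))).trans (ncard_union_le _ _)

end Segment

section Porosity

variable {E : Type*} [SeminormedAddCommGroup E] [NormedSpace ℝ E]

/-- Porosity on lines in a real (semi)normed space: every segment of length `R ∈ [ρ₀, ρ₁]`
contains the center of a ball of radius `ν * R` that misses `Y`. It extends `LinePorous` beyond the
Euclidean plane. -/
def SegmentPorous (ν ρ₀ ρ₁ : ℝ) (Y : Set E) : Prop :=
  ∀ a b : E, dist a b ∈ Icc ρ₀ ρ₁ → ∃ x ∈ segment ℝ a b, Disjoint Y (ball x (ν * dist a b))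

theorem SegmentPorous.mono {ν ν' ρ₀ ρ₀' ρ₁ ρ₁' : ℝ} {Y Y' : Set E}
    (hY : SegmentPorous ν ρ₀ ρ₁ Y) (hν : ν' ≤ ν) (h₀ : ρ₀ ≤ ρ₀') (h₁ : ρ₁' ≤ ρ₁) (hYY' : Y' ⊆ Y) :
    SegmentPorous ν' ρ₀' ρ₁' Y' := by
  intro a b hab
  obtain ⟨x, hx, hhole⟩ := hY a b (Icc_subset_Icc h₀ h₁ hab)
  exact ⟨x, hx, hhole.mono hYY' (ball_subset_ball (by gcongr))⟩

theorem LinePorous.segmentPorous {ν ρ₀ ρ₁ : ℝ} {Y : Set (EuclideanSpace ℝ (Fin 2))}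
    (hY : LinePorous ν ρ₀ ρ₁ Y) : SegmentPorous ν ρ₀ ρ₁ Y := by
  simpa only [LinePorous, SegmentPorous, disjoint_iff_inter_eq_empty] using hY

theorem SegmentPorous.ncard_inter_thickening_le_or_exists_split {ν r ρ : ℝ} (hν₀ : 0 < ν)
    (hν₁ : ν ≤ 1) (hr : 0 < r) {S : Set E} (hS : SegmentPorous ν r ρ S)
    (hfin : ∀ c d : E, (S ∩ thickening (2 * r) (segment ℝ c d)).Finite) {N : ℕ}
    (hN : ∀ c : E, (S ∩ closedBall c ((8 / ν + 2) * r)).encard ≤ N) {a b : E}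
    (hab : dist a b ≤ ρ) :
    (S ∩ thickening (2 * r) (segment ℝ a b)).ncard ≤ N ∨
      ∃ p q : E, (dist a p + r) + (dist q b + r) ≤ (1 - ν / 4) * (dist a b + r) ∧
        (S ∩ thickening (2 * r) (segment ℝ a b)).ncard ≤
          (S ∩ thickening (2 * r) (segment ℝ a p)).ncard +
            (S ∩ thickening (2 * r) (segment ℝ q b)).ncard := by
  rcases le_or_gt (ν * dist a b) (8 * r) with hshort | hlong
  · left
    have hradius : dist a b + 2 * r ≤ (8 / ν + 2) * r := by
      have : dist a b ≤ 8 * r / ν := (le_div_iff₀' hν₀).2 hshort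
      linarith [div_mul_eq_mul_div 8 ν r]
    have hsub : S ∩ thickening (2 * r) (segment ℝ a b) ⊆ S ∩ closedBall a ((8 / ν + 2) * r) :=
      inter_subset_inter_right S <| (thickening_segment_subset_closedBall a b _).trans
        (closedBall_subset_closedBall hradius)
    exact (encard_le_coe_iff_finite_ncard_le.1 ((encard_le_encard hsub).trans (hN a))).2
  · right
    have hle : ν * dist a b ≤ dist a b := mul_le_of_le_one_left dist_nonneg hν₁
    obtain ⟨x, hx, hhole⟩ := hS a b ⟨by linarith, hab⟩
    obtain ⟨p, q, hpq, hcard⟩ := exists_ncard_inter_thickening_segment_le_add hfin hν₀.le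
      (by linarith) (by linarith) hx hhole
    have hνr : ν * r ≤ r := mul_le_of_le_one_left hr.le hν₁
    exact ⟨p, q, by linarith, hcard⟩

end Porosity

theorem exists_ncard_inter_thickening_le_mul_rpow (E : Type*) [SeminormedAddCommGroup E]
    [NormedSpace ℝ E] [ProperSpace E] {ν : ℝ} (hν₀ : 0 < ν) (hν₁ : ν ≤ 1) :
    ∃ N : ℕ, ∃ δ ∈ Ioo (0 : ℝ) 1, ∀ r > 0, ∀ (a b : E) (S : Set E),
      SegmentPorous ν r (dist a b) S → S.Pairwise (r < dist · ·) →
        (S ∩ thickening (2 * r) (segment ℝ a b)).Finite ∧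
        ((S ∩ thickening (2 * r) (segment ℝ a b)).ncard : ℝ) ≤ N * ((dist a b + r) / r) ^ δ := by
  obtain ⟨N, hN⟩ := exists_encard_le_of_pairwise_lt_dist E (8 / ν + 2)
  obtain ⟨δ, hδ, hadd⟩ :=
    exists_forall_rpow_add_rpow_le (κ := 1 - ν / 4) (by linarith) (by linarith)
  refine ⟨N, δ, hδ, fun r hr a b S hS hsep => ?_⟩
  have hfin (c d : E) : (S ∩ thickening (2 * r) (segment ℝ c d)).Finite :=
    finite_of_totallyBounded_of_pairwise_lt_dist
      ((isCompact_closedBall c (dist c d + 2 * r)).totallyBounded.subset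
        (inter_subset_right.trans (thickening_segment_subset_closedBall c d _)))
      hr (hsep.mono inter_subset_left)
  have hball (c : E) : (S ∩ closedBall c ((8 / ν + 2) * r)).encard ≤ N :=
    hN r hr c _ inter_subset_right (hsep.mono inter_subset_left)
  refine ⟨hfin a b, ?_⟩
  refine le_mul_rpow_of_le_or_le_add (α := E × E) (κ := 1 - ν / 4) (W := dist a b + r)
    (F := fun c => ((S ∩ thickening (2 * r) (segment ℝ c.1 c.2)).ncard : ℝ))
    (w := fun c => dist c.1 c.2 + r) (a := (a, b)) hr (by linarith) hδ.1.le N.cast_nonneg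
    (fun _ => le_add_of_nonneg_left dist_nonneg) hadd (fun c hc => ?_) le_rfl
  rcases hS.ncard_inter_thickening_le_or_exists_split hν₀ hν₁ hr hfin hball
    (le_of_add_le_add_right hc) with hbase | ⟨p, q, hpq, hcard⟩
  · exact Or.inl (mod_cast hbase)
  · exact Or.inr ⟨(c.1, p), (q, c.2), hpq, mod_cast hcard⟩

theorem porosity_count_general (E : Type*) [SeminormedAddCommGroup E] [NormedSpace ℝ E]
    [ProperSpace E] {ν : ℝ} (hν : 0 < ν) :
    ∃ C > (0 : ℝ), ∃ δ ∈ Ioo (0 : ℝ) 1, ∀ r > 0, ∀ a b : E, r ≤ dist a b → ∀ S : Set E,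
      SegmentPorous ν r (dist a b) S → S.Pairwise (r < dist · ·) →
        (S ∩ (segment ℝ a b + ball 0 (2 * r))).Finite ∧
        ((S ∩ (segment ℝ a b + ball 0 (2 * r))).ncard : ℝ) ≤ C * (dist a b / r) ^ δ := by
  obtain ⟨N, δ, hδ, hcount⟩ :=
    exists_ncard_inter_thickening_le_mul_rpow E (lt_min hν one_pos) (min_le_right ν 1)
  refine ⟨2 ^ δ * (N + 1), by positivity, δ, hδ, fun r hr a b hrab S hS hsep => ?_⟩
  have hSmin := hS.mono (min_le_left ν 1) le_rfl le_rfl Subset.rfl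
  rw [add_ball_zero]
  refine (hcount r hr a b S hSmin hsep).imp_right fun hcard => hcard.trans ?_
  calc N * ((dist a b + r) / r) ^ δ
      ≤ (N + 1) * (2 * (dist a b / r)) ^ δ := by
        have := hδ.1
        gcongr
        · linarith
        · rw [← mul_div_assoc]
          gcongr
          linarith
    _ = 2 ^ δ * (N + 1) * (dist a b / r) ^ δ := by
        rw [mul_rpow zero_le_two (by positivity)]
        ring

/-- Counting lemma for line porous sets: an `r₀`-separated subset `S` of a line porous
set `Y` has at most `C (r₁/r₀)^δ` points in the `2r₀`-neighborhood of a line segment of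
length `r₁`. -/
theorem porosity_count (ν : ℝ) (hν : ν ∈ Set.Ioo 0 (1/10)) :
    ∃ C > (0:ℝ), ∃ δ ∈ Set.Ioo (0:ℝ) 1,
    ∀ ρ₀ ρ₁ : ℝ, 0 < ρ₀ → ρ₀ ≤ ρ₁ →
    ∀ Y : Set (EuclideanSpace ℝ (Fin 2)), LinePorous ν ρ₀ ρ₁ Y →
    ∀ r₀ r₁ : ℝ, ρ₀ ≤ r₀ → r₀ ≤ r₁ → r₁ ≤ ρ₁ →
    ∀ a b : EuclideanSpace ℝ (Fin 2), dist a b = r₁ →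
    ∀ S : Set (EuclideanSpace ℝ (Fin 2)), S ⊆ Y →
      (∀ x ∈ S, ∀ x' ∈ S, x ≠ x' → r₀ < dist x x') →
      (S ∩ (segment ℝ a b + Metric.ball 0 (2 * r₀))).Finite ∧
      ((S ∩ (segment ℝ a b + Metric.ball 0 (2 * r₀))).ncard : ℝ) ≤ C * (r₁ / r₀) ^ δ := by
  obtain ⟨C, hC, δ, hδ, hcount⟩ := porosity_count_general (EuclideanSpace ℝ (Fin 2)) hν.1
  refine ⟨C, hC, δ, hδ, ?_⟩
  rintro ρ₀ ρ₁ hρ₀ - Y hY r₀ r₁ hr₀ hr₀₁ hr₁ a b rfl S hSY hsep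
  exact hcount r₀ (hρ₀.trans_le hr₀) a b hr₀₁ S (hY.segmentPorous.mono le_rfl hr₀ hr₁ hSY)
    fun x hx x' hx' => hsep x hx x' hx'

end
end
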